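/- arXiv:math/0701228 — 2 statements merged into one kernel-verified Lean document; each statement's English description precedes it below -/
import Mathlib

section
/- For every t > 0 and every K > 1, writing r' = 1/√(1+t), one has η_K(t) < (1/16)·exp(2K·μ(r')) − 1/2 + c₂(t,K)·exp(−2K·μ(r')), where c₂(t,K) = (1/16)·(1 + 4·(5·exp(−8K·μ(r')) + 14·exp(−4K·μ(r')) + 5)/(exp(−12K·μ(r')) + 7·exp(−8K·μ(r')) + 7·exp(−4K·μ(r')) + 1)); moreover c₂(t,K) < 21/16. -/
open Set Filter

/-- Complete elliptic integral of the first kind. -/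
noncomputable def ellK (r : ℝ) : ℝ :=
  ∫ θ in (0:ℝ)..(Real.pi / 2), (1 - r ^ 2 * Real.sin θ ^ 2) ^ (-(1/2) : ℝ)

/-- The Grötzsch modulus μ(r) = (π/2)·𝒦'(r)/𝒦(r). -/
noncomputable def mu (r : ℝ) : ℝ :=
  Real.pi / 2 * ellK (Real.sqrt (1 - r ^ 2)) / ellK r

lemma aux_sin_sq (θ : ℝ) : 0 ≤ Real.sin θ ^ 2 ∧ Real.sin θ ^ 2 ≤ 1 :=
  ⟨sq_nonneg _, Real.sin_sq_le_one θ⟩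

lemma aux_base_pos {r : ℝ} (h : r ^ 2 < 1) (θ : ℝ) : 0 < 1 - r ^ 2 * Real.sin θ ^ 2 := by
  have := aux_sin_sq θ
  nlinarith [sq_nonneg r]

lemma aux_cont {r : ℝ} (h : r ^ 2 < 1) :
    Continuous fun θ : ℝ => (1 - r ^ 2 * Real.sin θ ^ 2) ^ (-(1/2) : ℝ) := by
  apply Continuous.rpow_const (by fun_prop)
  intro θ
  exact Or.inl (aux_base_pos h θ).ne'

lemma aux_rpow {x : ℝ} (h : 0 ≤ x) : x ^ (-(1/2) : ℝ) = 1 / Real.sqrt x := by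
  rw [Real.rpow_neg h, Real.sqrt_eq_rpow, one_div, one_div]

lemma landen {r k : ℝ} (hr : 0 ≤ r) (hr1 : r < 1) (hk : k ^ 2 = 4 * r / (1 + r) ^ 2) :
    ellK k = (1 + r) * ellK r := by
  have hk1 : k ^ 2 < 1 := by
    rw [hk, div_lt_one (by positivity)]
    nlinarith [sq_pos_of_pos (sub_pos.2 hr1)]
  have hr2 : r ^ 2 < 1 := by nlinarith
  have hpi := Real.pi_pos
  let f : ℝ → ℝ := fun φ => Real.arcsin ((1 + r) * Real.sin φ / (1 + r * Real.sin φ ^ 2))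
  let f' : ℝ → ℝ := fun φ => (1 + r) * (1 - r * Real.sin φ ^ 2) /
    ((1 + r * Real.sin φ ^ 2) * Real.sqrt (1 - r ^ 2 * Real.sin φ ^ 2))
  let g : ℝ → ℝ := fun θ => (1 - k ^ 2 * Real.sin θ ^ 2) ^ (-(1/2) : ℝ)
  have hpos : ∀ φ : ℝ, 0 < 1 + r * Real.sin φ ^ 2 := fun φ => by positivity
  have hpos2 : ∀ φ : ℝ, 0 < 1 - r * Real.sin φ ^ 2 := fun φ => by
    have := aux_sin_sq φ
    nlinarith
  have hsq : ∀ φ : ℝ, 0 < Real.sqrt (1 - r ^ 2 * Real.sin φ ^ 2) :=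
    fun φ => Real.sqrt_pos.2 (aux_base_pos hr2 φ)
  have hfc : Continuous f := by
    apply Real.continuous_arcsin.comp
    apply Continuous.div (by fun_prop) (by fun_prop)
    intro φ; exact (hpos φ).ne'
  have hf'c : Continuous f' := by
    apply Continuous.div (by fun_prop) (by fun_prop)
    intro φ; exact (mul_pos (hpos φ) (hsq φ)).ne'
  have hgc : Continuous g := aux_cont hk1
  have hderiv : ∀ φ ∈ Ioo (0:ℝ) (Real.pi / 2), HasDerivAt f (f' φ) φ := by
    intro φ hφ
    have hs0 : 0 < Real.sin φ := Real.sin_pos_of_pos_of_lt_pi hφ.1 (by linarith [hφ.2])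
    have hc0 : 0 < Real.cos φ := Real.cos_pos_of_mem_Ioo ⟨by linarith [hφ.1], hφ.2⟩
    have hsc := Real.sin_sq_add_cos_sq φ
    have hA : HasDerivAt (fun φ : ℝ => (1 + r) * Real.sin φ / (1 + r * Real.sin φ ^ 2))
      ((1 + r) * Real.cos φ * (1 - r * Real.sin φ ^ 2) / (1 + r * Real.sin φ ^ 2) ^ 2) φ := by
      have h1 := (Real.hasDerivAt_sin φ).const_mul (1 + r)
      have h2 := (((Real.hasDerivAt_sin φ).pow 2).const_mul r).const_add 1
      have h3 := h1.div h2 (hpos φ).ne'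
      refine HasDerivAt.congr_deriv h3 ?_
      congr 1
      push_cast
      simp only [Pi.pow_apply]
      ring
    have hp := hpos φ
    have hid : 1 - ((1 + r) * Real.sin φ / (1 + r * Real.sin φ ^ 2)) ^ 2
        = (Real.cos φ * Real.sqrt (1 - r ^ 2 * Real.sin φ ^ 2) / (1 + r * Real.sin φ ^ 2)) ^ 2 := by
      rw [div_pow, div_pow, mul_pow (Real.cos φ), Real.sq_sqrt (aux_base_pos hr2 φ).le, eq_div_iff (by positivity), sub_mul,
        div_mul_cancel₀ _ (by positivity), Real.cos_sq']
      ring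
    have hq : 0 < Real.cos φ * Real.sqrt (1 - r ^ 2 * Real.sin φ ^ 2) / (1 + r * Real.sin φ ^ 2) :=
      div_pos (mul_pos hc0 (hsq φ)) hp
    have hlt : ((1 + r) * Real.sin φ / (1 + r * Real.sin φ ^ 2)) ^ 2 < 1 := by
      nlinarith [sq_pos_of_pos hq]
    have habs := abs_lt.1 ((sq_lt_one_iff_abs_lt_one _).1 hlt)
    have hB := (Real.hasDerivAt_arcsin habs.1.ne' habs.2.ne).comp φ hA
    refine HasDerivAt.congr_deriv hB ?_
    rw [hid, Real.sqrt_sq hq.le]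
    have := (hsq φ)
    simp only [f']
    field_simp
  have hgf : ∀ φ : ℝ, φ ∈ Icc (0:ℝ) (Real.pi/2) → (g ∘ f) φ * f' φ = (1 + r) * (1 - r ^ 2 * Real.sin φ ^ 2) ^ (-(1/2) : ℝ) := by
    intro φ hφ
    have hs0 : 0 ≤ Real.sin φ := Real.sin_nonneg_of_nonneg_of_le_pi hφ.1 (by linarith [hφ.2])
    have hs1 := Real.sin_le_one φ
    have hp := hpos φ
    have hp2 := hpos2 φ
    have h1 : Real.sin (f φ) = (1 + r) * Real.sin φ / (1 + r * Real.sin φ ^ 2) := by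
      apply Real.sin_arcsin
      · have : 0 ≤ (1 + r) * Real.sin φ / (1 + r * Real.sin φ ^ 2) := by positivity
        linarith
      · rw [div_le_one hp]
        nlinarith [mul_nonneg (sub_nonneg.2 hs1) (sub_nonneg.2 (mul_le_one₀ hr1.le hs0 hs1))]
    have h2 : 1 - k ^ 2 * Real.sin (f φ) ^ 2 = ((1 - r * Real.sin φ ^ 2) / (1 + r * Real.sin φ ^ 2)) ^ 2 := by
      rw [h1, hk]
      field_simp
      ring
    have := hsq φ
    simp only [Function.comp, g, f']
    rw [h2, aux_rpow (sq_nonneg _), aux_rpow (aux_base_pos hr2 φ).le, Real.sqrt_sq (by positivity)]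
    field_simp
  have h0 : f 0 = 0 := by simp [f]
  have h1 : f (Real.pi / 2) = Real.pi / 2 := by
    simp only [f, Real.sin_pi_div_two]
    rw [show (1 + r) * 1 / (1 + r * 1 ^ 2) = 1 by field_simp]
    exact Real.arcsin_one
  have hmain := intervalIntegral.integral_comp_mul_deriv''' (f := f) (f' := f') (g := g) (a := 0) (b := Real.pi / 2)
    hfc.continuousOn
    (by
      intro x hx
      rw [min_eq_left (by positivity), max_eq_right (by positivity)] at hx
      exact (hderiv x hx).hasDerivWithinAt)
    hgc.continuousOn
    (by
      apply (hgc.continuousOn).integrableOn_compact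
      exact isCompact_uIcc.image hfc)
    (by
      apply ContinuousOn.integrableOn_compact isCompact_uIcc
      exact ((hgc.comp hfc).mul hf'c).continuousOn)
  rw [h0, h1] at hmain
  unfold ellK
  rw [← intervalIntegral.integral_const_mul, ← hmain]
  apply intervalIntegral.integral_congr
  intro φ hφ
  rw [uIcc_of_le (by positivity)] at hφ
  exact hgf φ hφ

lemma ellK_pos {r : ℝ} (h : r ^ 2 < 1) : 0 < ellK r := by
  apply intervalIntegral.intervalIntegral_pos_of_pos ((aux_cont h).intervalIntegrable _ _)
  · intro x; exact Real.rpow_pos_of_pos (aux_base_pos h x) _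
  · positivity

lemma ellK_le {r : ℝ} (h : r ^ 2 < 1) : ellK r ≤ Real.pi / 2 / Real.sqrt (1 - r ^ 2) := by
  have h1 : ellK r ≤ ∫ θ in (0:ℝ)..(Real.pi / 2), 1 / Real.sqrt (1 - r ^ 2) := by
    apply intervalIntegral.integral_mono_on (by positivity) ((aux_cont h).intervalIntegrable _ _)
      (by simp)
    intro x hx
    rw [aux_rpow (aux_base_pos h x).le]
    apply one_div_le_one_div_of_le (Real.sqrt_pos.2 (by linarith))
    apply Real.sqrt_le_sqrt
    have := aux_sin_sq x
    nlinarith [sq_nonneg r]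
  rw [intervalIntegral.integral_const] at h1
  simpa [div_eq_mul_inv] using h1

lemma ellK_ge {u : ℝ} (h0 : 0 < u) (h1 : u < 1) : Real.log (1 / u) ≤ ellK (Real.sqrt (1 - u ^ 2)) := by
  have hu : (Real.sqrt (1 - u ^ 2)) ^ 2 = 1 - u ^ 2 := Real.sq_sqrt (by nlinarith)
  have hlt : (Real.sqrt (1 - u ^ 2)) ^ 2 < 1 := by rw [hu]; nlinarith
  have hpi := Real.pi_gt_three
  have hI : ∫ θ in (0:ℝ)..(Real.pi / 2), ((Real.pi / 2 + u) - θ)⁻¹ = Real.log ((Real.pi / 2 + u) / u) := by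
    rw [intervalIntegral.integral_comp_sub_left (fun x => x⁻¹), integral_inv_of_pos] <;> simp <;> linarith
  have h2 : ∫ θ in (0:ℝ)..(Real.pi / 2), ((Real.pi / 2 + u) - θ)⁻¹ ≤ ellK (Real.sqrt (1 - u ^ 2)) := by
    apply intervalIntegral.integral_mono_on (by positivity) _ ((aux_cont hlt).intervalIntegrable _ _)
    · intro x hx
      rw [aux_rpow (aux_base_pos hlt x).le, ← one_div]
      apply one_div_le_one_div_of_le (Real.sqrt_pos.2 (aux_base_pos hlt x))
      rw [hu]
      apply Real.sqrt_le_iff.2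
      refine ⟨by linarith [hx.2], ?_⟩
      have hc : Real.cos x ≤ Real.pi / 2 - x := by
        rw [← Real.sin_pi_div_two_sub]; exact Real.sin_le (by linarith [hx.2])
      have hc0 : 0 ≤ Real.cos x := Real.cos_nonneg_of_mem_Icc ⟨by linarith [hx.1], hx.2⟩
      have := Real.sin_sq_add_cos_sq x
      have h3 : 1 - (1 - u ^ 2) * Real.sin x ^ 2 ≤ (Real.cos x + u) ^ 2 := by
        nlinarith [aux_sin_sq x, mul_nonneg hc0 h0.le, mul_nonneg (sq_nonneg u) (sq_nonneg (Real.cos x))]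
      refine h3.trans ?_
      apply pow_le_pow_left₀ (by positivity)
      linarith
    · apply ContinuousOn.intervalIntegrable
      apply ContinuousOn.inv₀ (by fun_prop)
      intro x hx
      rw [uIcc_of_le (by positivity)] at hx
      have := hx.2
      have : 0 < Real.pi / 2 + u - x := by linarith
      exact this.ne'
  rw [hI] at h2
  refine le_trans ?_ h2
  apply Real.log_le_log (by positivity)
  gcongr
  linarith

lemma compl_facts {u : ℝ} (h0 : 0 < u) (h1 : u < 1) :
    0 < Real.sqrt (1 - u ^ 2) ∧ Real.sqrt (1 - u ^ 2) < 1 ∧ Real.sqrt (1 - u ^ 2) ^ 2 = 1 - u ^ 2 := by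
  have h : 0 < 1 - u ^ 2 := by nlinarith
  refine ⟨Real.sqrt_pos.2 h, ?_, Real.sq_sqrt h.le⟩
  rw [Real.sqrt_lt' one_pos]; nlinarith

lemma mu_pos {u : ℝ} (h0 : 0 < u) (h1 : u < 1) : 0 < mu u := by
  obtain ⟨a, b, c⟩ := compl_facts h0 h1
  have := ellK_pos (r := u) (by nlinarith)
  have := ellK_pos (r := Real.sqrt (1 - u ^ 2)) (by nlinarith)
  unfold mu
  positivity

lemma mu_ge {u : ℝ} (h0 : 0 < u) (h1 : u < 1) : Real.log (1 / u) - 1 ≤ mu u := by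
  obtain ⟨a, b, c⟩ := compl_facts h0 h1
  have hL : 0 ≤ Real.log (1 / u) := Real.log_nonneg (by rw [le_div_iff₀ h0]; linarith)
  have hL2 : Real.log (1 / u) ≤ 1 / u := Real.log_le_self (by positivity)
  have hKp := ellK_pos (r := u) (by nlinarith)
  have hK := ellK_le (r := u) (by nlinarith)
  have hK' := ellK_ge h0 h1
  have e1 : Real.sqrt (1 - u ^ 2) * Real.log (1 / u) ≤ mu u := by
    unfold mu
    rw [le_div_iff₀ hKp]
    rw [le_div_iff₀ a] at hK
    have hpi := Real.pi_pos
    calc Real.sqrt (1 - u ^ 2) * Real.log (1 / u) * ellK u = (ellK u * Real.sqrt (1 - u ^ 2)) * Real.log (1 / u) := by ring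
      _ ≤ (Real.pi / 2) * Real.log (1 / u) := by gcongr
      _ ≤ _ := by gcongr
  have e2 : 1 - u ^ 2 ≤ Real.sqrt (1 - u ^ 2) := by nlinarith
  have e3 : u ^ 2 * Real.log (1 / u) ≤ 1 := by
    calc u ^ 2 * Real.log (1 / u) ≤ u ^ 2 * (1 / u) := by gcongr
      _ = u := by field_simp
      _ ≤ 1 := h1.le
  nlinarith [mul_le_mul_of_nonneg_right e2 hL]

/-- One descending Landen step. -/
noncomputable def desc (u : ℝ) : ℝ := (1 - Real.sqrt (1 - u ^ 2)) / (1 + Real.sqrt (1 - u ^ 2))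

lemma desc_mem {u : ℝ} (h0 : 0 < u) (h1 : u < 1) : 0 < desc u ∧ desc u < 1 := by
  obtain ⟨a, b, c⟩ := compl_facts h0 h1
  unfold desc
  refine ⟨div_pos (by linarith) (by linarith), ?_⟩
  rw [div_lt_one (by linarith)]; linarith

lemma desc_compl {u : ℝ} (h0 : 0 < u) (h1 : u < 1) : 1 - desc u ^ 2 =
    4 * Real.sqrt (1 - u ^ 2) / (1 + Real.sqrt (1 - u ^ 2)) ^ 2 := by
  obtain ⟨a, b, c⟩ := compl_facts h0 h1
  unfold desc
  field_simp
  ring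

lemma mu_desc {u : ℝ} (h0 : 0 < u) (h1 : u < 1) : mu (desc u) = 2 * mu u := by
  obtain ⟨a, b, c⟩ := compl_facts h0 h1
  obtain ⟨d0, d1⟩ := desc_mem h0 h1
  have e1 : ellK u = (1 + desc u) * ellK (desc u) := by
    apply landen d0.le d1
    have : u ^ 2 = 1 - Real.sqrt (1 - u ^ 2) ^ 2 := by rw [c]; ring
    rw [this]
    unfold desc
    field_simp
    ring
  have e2 : ellK (Real.sqrt (1 - desc u ^ 2)) = (1 + Real.sqrt (1 - u ^ 2)) * ellK (Real.sqrt (1 - u ^ 2)) := by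
    apply landen a.le b
    rw [Real.sq_sqrt (by nlinarith), desc_compl h0 h1]
  have hKp := ellK_pos (r := desc u) (by nlinarith)
  unfold mu
  rw [e1, e2]
  have e3 : (1 + Real.sqrt (1 - u ^ 2)) * (1 + desc u) = 2 := by
    unfold desc; field_simp; ring
  have : 0 < 1 + desc u := by linarith
  field_simp
  linear_combination (ellK (Real.sqrt (1 - u ^ 2))) * e3

/-- The fourth root of the complementary modulus. -/
noncomputable def rt (u : ℝ) : ℝ := Real.sqrt (Real.sqrt (Real.sqrt (1 - u ^ 2)))

lemma rt_facts {u : ℝ} (h0 : 0 < u) (h1 : u < 1) : 0 < rt u ∧ rt u < 1 ∧ rt u ^ 4 = Real.sqrt (1 - u ^ 2) ∧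
    rt u ^ 8 = 1 - u ^ 2 := by
  obtain ⟨a, b, c⟩ := compl_facts h0 h1
  have e : rt u ^ 4 = Real.sqrt (1 - u ^ 2) := by
    unfold rt
    rw [show (4:ℕ) = 2 * 2 from rfl, pow_mul, Real.sq_sqrt (Real.sqrt_nonneg _), Real.sq_sqrt a.le]
  have p : 0 < rt u := Real.sqrt_pos.2 (Real.sqrt_pos.2 a)
  refine ⟨p, ?_, e, ?_⟩
  · rw [← pow_lt_one_iff_of_nonneg p.le (n := 4) (by norm_num), e]; exact b
  · rw [show (8:ℕ) = 4 * 2 from rfl, pow_mul, e, c]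

/-- The inverse hyperbolic tangent of the fourth root. -/
noncomputable def lowF (u : ℝ) : ℝ := Real.log ((1 + rt u) / (1 - rt u)) / 2

lemma lowF_desc {u : ℝ} (h0 : 0 < u) (h1 : u < 1) : 2 * lowF u < lowF (desc u) := by
  obtain ⟨d0, d1⟩ := desc_mem h0 h1
  obtain ⟨a0, a1, a4, a8⟩ := rt_facts h0 h1
  obtain ⟨b0, b1, b4, b8⟩ := rt_facts d0 d1
  rw [desc_compl h0 h1, ← a4] at b8
  set a := rt u
  set b := rt (desc u)
  have hc : 2 * a / (1 + a ^ 2) < b := by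
    apply lt_of_pow_lt_pow_left₀ 8 b0.le
    rw [b8, div_pow, div_lt_div_iff₀ (by positivity) (by positivity)]
    have k1 : 0 < (1 + a ^ 2) ^ 4 - 8 * a ^ 2 * (1 + a ^ 4) := by
      have : (1 + a ^ 2) ^ 4 - 8 * a ^ 2 * (1 + a ^ 4) = ((1 - a ^ 2) ^ 2) ^ 2 := by ring
      rw [this]
      have : 0 < 1 - a ^ 2 := by nlinarith
      positivity
    have k2 : (8 * a ^ 2 * (1 + a ^ 4)) ^ 2 < ((1 + a ^ 2) ^ 4) ^ 2 :=
      pow_lt_pow_left₀ (by linarith) (by positivity) (by norm_num)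
    have := mul_lt_mul_of_pos_left k2 (show 0 < 4 * a ^ 4 by positivity)
    nlinarith
  have hsq : ((1 + a) / (1 - a)) ^ 2 < (1 + b) / (1 - b) := by
    have : 0 < 1 - a := by linarith
    have : 0 < 1 - b := by linarith
    rw [div_lt_iff₀ (by positivity)] at hc
    rw [div_pow, div_lt_div_iff₀ (by positivity) (by positivity)]
    nlinarith
  have hp : 0 < (1 + a) / (1 - a) := div_pos (by linarith) (by linarith)
  have := Real.log_lt_log (by positivity) hsq
  rw [Real.log_pow] at this
  unfold lowF
  push_cast at this
  linarith

lemma lowF_le {u : ℝ} (h0 : 0 < u) (h1 : u < 1) : lowF u ≤ mu u + (1 + Real.log 4) := by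
  obtain ⟨a0, a1, a4, a8⟩ := rt_facts h0 h1
  have h := mu_ge h0 h1
  have hb : (1 + rt u) / (1 - rt u) ≤ (4 * (1 / u)) ^ 2 := by
    set a := rt u
    have e : (4 * (1 / u)) ^ 2 = 16 / (1 - a ^ 8) := by rw [a8]; field_simp; ring
    have p : 0 < 1 - a := by linarith
    have p8 : 0 < 1 - a ^ 8 := by rw [a8]; have : 0 < u ^ 2 := by positivity
                                  linarith
    rw [e, div_le_div_iff₀ p p8]
    have e2 : (1 + a) * (1 - a ^ 8) = ((1 + a) * (1 + a) * (1 + a ^ 2) * (1 + a ^ 4)) * (1 - a) := by ring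
    rw [e2]
    have q2 : a ^ 2 ≤ 1 := pow_le_one₀ a0.le a1.le
    have q4 : a ^ 4 ≤ 1 := pow_le_one₀ a0.le a1.le
    gcongr
    calc (1 + a) * (1 + a) * (1 + a ^ 2) * (1 + a ^ 4) ≤ (1 + 1) * (1 + 1) * (1 + 1) * (1 + 1) := by gcongr
      _ = 16 := by norm_num
  have hl := Real.log_le_log (div_pos (by linarith) (by linarith)) hb
  rw [Real.log_pow, Real.log_mul (by norm_num) (by positivity)] at hl
  unfold lowF
  push_cast at hl
  linarith

lemma lowF_le_iter (n : ℕ) : ∀ u : ℝ, 0 < u → u < 1 → lowF u ≤ mu u + (1 + Real.log 4) * (1 / 2) ^ n := by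
  induction n with
  | zero => intro u h0 h1; simpa using lowF_le h0 h1
  | succ n ih =>
    intro u h0 h1
    obtain ⟨d0, d1⟩ := desc_mem h0 h1
    have := ih _ d0 d1
    have := lowF_desc h0 h1
    rw [mu_desc h0 h1] at *
    rw [pow_succ]
    linarith

lemma lowF_lt_mu {u : ℝ} (h0 : 0 < u) (h1 : u < 1) : lowF u < mu u := by
  have key : ∀ u : ℝ, 0 < u → u < 1 → lowF u ≤ mu u := by
    intro u h0 h1
    have ht : Tendsto (fun n : ℕ => mu u + (1 + Real.log 4) * (1 / 2 : ℝ) ^ n) atTop (nhds (mu u + (1 + Real.log 4) * 0)) :=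
      ((tendsto_pow_atTop_nhds_zero_of_lt_one (by norm_num) (by norm_num)).const_mul _).const_add _
    rw [mul_zero, add_zero] at ht
    exact ge_of_tendsto' ht (fun n => lowF_le_iter n u h0 h1)
  obtain ⟨d0, d1⟩ := desc_mem h0 h1
  have e1 := key _ d0 d1
  have e2 := lowF_desc h0 h1
  rw [mu_desc h0 h1] at e1
  linarith

lemma rt_lt {u : ℝ} (h0 : 0 < u) (h1 : u < 1) :
    rt u < (1 - Real.exp (-(2 * mu u))) / (1 + Real.exp (-(2 * mu u))) := by
  obtain ⟨a0, a1, a4, a8⟩ := rt_facts h0 h1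
  have h := lowF_lt_mu h0 h1
  unfold lowF at h
  have p : 0 < 1 - rt u := by linarith
  have h2 : Real.log ((1 + rt u) / (1 - rt u)) < 2 * mu u := by linarith
  rw [Real.log_lt_iff_lt_exp (div_pos (by linarith) p), div_lt_iff₀ p] at h2
  have hq := Real.exp_pos (-(2 * mu u))
  have he : Real.exp (-(2 * mu u)) * Real.exp (2 * mu u) = 1 := by rw [← Real.exp_add]; simp
  rw [lt_div_iff₀ (by positivity)]
  have := mul_lt_mul_of_pos_left h2 hq
  rw [← mul_assoc, he] at this
  linarith

lemma ellK_contOn {c : ℝ} (hc0 : 0 ≤ c) (hc : c < 1) : ContinuousOn ellK (Icc 0 c) := by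
  have hcont : Continuous fun r : ℝ => ∫ θ in (0:ℝ)..(Real.pi / 2),
      (max (1 - c ^ 2) (1 - r ^ 2 * Real.sin θ ^ 2)) ^ (-(1/2) : ℝ) := by
    apply intervalIntegral.continuous_parametric_intervalIntegral_of_continuous'
    apply Continuous.rpow_const (by fun_prop)
    intro x
    left
    have : 0 < 1 - c ^ 2 := by nlinarith
    exact (lt_max_of_lt_left this).ne'
  apply hcont.continuousOn.congr
  intro r hr
  unfold ellK
  apply intervalIntegral.integral_congr
  intro θ _
  simp only
  rw [max_eq_right]
  have := aux_sin_sq θ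
  have : r ^ 2 ≤ c ^ 2 := pow_le_pow_left₀ hr.1 hr.2 2
  nlinarith [sq_nonneg r]

lemma mu_contOn {e c : ℝ} (he : 0 < e) (hec : e ≤ c) (hc : c < 1) : ContinuousOn mu (Icc e c) := by
  unfold mu
  apply ContinuousOn.div
  · apply ContinuousOn.mul continuousOn_const
    obtain ⟨a, b, d⟩ := compl_facts he (by linarith)
    apply (ellK_contOn a.le b).comp (by fun_prop)
    intro x hx
    refine ⟨Real.sqrt_nonneg _, Real.sqrt_le_sqrt ?_⟩
    have := pow_le_pow_left₀ he.le hx.1 2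
    linarith
  · exact (ellK_contOn (by linarith) hc).mono (Icc_subset_Icc he.le le_rfl)
  · intro x hx
    have := hx.1
    have := hx.2
    exact (ellK_pos (by nlinarith)).ne'

lemma mu_exists {c y : ℝ} (h0 : 0 < c) (h1 : c < 1) (hy : mu c < y) : ∃ u ∈ Ioo (0:ℝ) 1, mu u = y := by
  let e := min c (Real.exp (-(y + 1)))
  have he : 0 < e := lt_min h0 (Real.exp_pos _)
  have hec : e ≤ c := min_le_left _ _
  have hge := mu_ge he (by linarith)
  have : y + 1 ≤ Real.log (1 / e) := by
    rw [one_div, Real.log_inv]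
    have : Real.log e ≤ Real.log (Real.exp (-(y + 1))) := Real.log_le_log he (min_le_right _ _)
    rw [Real.log_exp] at this
    linarith
  obtain ⟨u, hu, hu2⟩ := intermediate_value_Icc' hec (mu_contOn he hec h1) ⟨hy.le, by linarith⟩
  exact ⟨u, ⟨by linarith [hu.1], by linarith [hu.2]⟩, hu2⟩

lemma final_alg {u q : ℝ} (h0 : 0 < u) (h1 : u < 1) (hq : 0 < q) (hq1 : q < 1)
    (h : rt u < (1 - q) / (1 + q)) :
    1 / u ^ 2 - 1 < 1 / 16 * q⁻¹ - 1 / 2 +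
      (1 / 16 * (1 + 4 * (5 * q ^ 4 + 14 * q ^ 2 + 5) / (q ^ 6 + 7 * q ^ 4 + 7 * q ^ 2 + 1))) * q := by
  obtain ⟨a0, a1, a4, a8⟩ := rt_facts h0 h1
  have hp : 0 < q ^ 6 + 7 * q ^ 4 + 7 * q ^ 2 + 1 := by positivity
  have hD : (1 + q) ^ 8 - (1 - q) ^ 8 = 16 * q * (q ^ 6 + 7 * q ^ 4 + 7 * q ^ 2 + 1) := by ring
  have hR : 1 / 16 * q⁻¹ - 1 / 2 +
      (1 / 16 * (1 + 4 * (5 * q ^ 4 + 14 * q ^ 2 + 5) / (q ^ 6 + 7 * q ^ 4 + 7 * q ^ 2 + 1))) * q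
      = (1 + q) ^ 8 / (16 * q * (q ^ 6 + 7 * q ^ 4 + 7 * q ^ 2 + 1)) - 1 := by
    field_simp
    ring
  have h8 := pow_lt_pow_left₀ h a0.le (n := 8) (by norm_num)
  rw [a8, div_pow, lt_div_iff₀ (by positivity)] at h8
  rw [hR, ← hD]
  have : 0 < (1 + q) ^ 8 - (1 - q) ^ 8 := by rw [hD]; positivity
  rw [sub_lt_sub_iff_right, div_lt_div_iff₀ (by positivity) this]
  linarith

theorem stmt_16 (eta : ℝ → ℝ → ℝ)
    (heta : ∀ K t : ℝ, 0 < K → 0 < t → ∀ u ∈ Set.Ioo (0:ℝ) 1,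
      mu u = K * mu (1 / Real.sqrt (1 + t)) → eta K t = 1 / u ^ 2 - 1) :
    ∀ t K : ℝ, 0 < t → 1 < K →
      eta K t < 1 / 16 * Real.exp (2 * K * mu (1 / Real.sqrt (1 + t))) - 1 / 2 +
        (1 / 16 * (1 + 4 * (5 * Real.exp (-(8 * K * mu (1 / Real.sqrt (1 + t)))) +
            14 * Real.exp (-(4 * K * mu (1 / Real.sqrt (1 + t)))) + 5) /
          (Real.exp (-(12 * K * mu (1 / Real.sqrt (1 + t)))) +
            7 * Real.exp (-(8 * K * mu (1 / Real.sqrt (1 + t)))) +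
            7 * Real.exp (-(4 * K * mu (1 / Real.sqrt (1 + t)))) + 1))) *
          Real.exp (-(2 * K * mu (1 / Real.sqrt (1 + t)))) ∧
      1 / 16 * (1 + 4 * (5 * Real.exp (-(8 * K * mu (1 / Real.sqrt (1 + t)))) +
            14 * Real.exp (-(4 * K * mu (1 / Real.sqrt (1 + t)))) + 5) /
          (Real.exp (-(12 * K * mu (1 / Real.sqrt (1 + t)))) +
            7 * Real.exp (-(8 * K * mu (1 / Real.sqrt (1 + t)))) +
            7 * Real.exp (-(4 * K * mu (1 / Real.sqrt (1 + t)))) + 1)) < 21 / 16 := by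
  intro t K ht hK
  have hs : 1 < Real.sqrt (1 + t) := by
    rw [Real.lt_sqrt (by norm_num)]; linarith
  have c0 : 0 < 1 / Real.sqrt (1 + t) := by positivity
  have c1 : 1 / Real.sqrt (1 + t) < 1 := by rw [div_lt_one (by positivity)]; exact hs
  have hm := mu_pos c0 c1
  obtain ⟨u, hu, hmu⟩ := mu_exists (y := K * mu (1 / Real.sqrt (1 + t))) c0 c1 (by nlinarith)
  rw [heta K t (by linarith) ht u hu hmu]
  have hr := rt_lt hu.1 hu.2
  rw [hmu] at hr
  have hy : 0 < K * mu (1 / Real.sqrt (1 + t)) := by positivity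
  simp only [mul_assoc]
  generalize K * mu (1 / Real.sqrt (1 + t)) = y at *
  have q1 : Real.exp (-(2 * y)) < 1 := by rw [Real.exp_lt_one_iff]; linarith
  have q0 := Real.exp_pos (-(2 * y))
  have e1 : Real.exp (2 * y) = (Real.exp (-(2 * y)))⁻¹ := by rw [← Real.exp_neg, neg_neg]
  have e4 : Real.exp (-(4 * y)) = Real.exp (-(2 * y)) ^ 2 := by rw [← Real.exp_nat_mul]; congr 1; push_cast; ring
  have e8 : Real.exp (-(8 * y)) = Real.exp (-(2 * y)) ^ 4 := by rw [← Real.exp_nat_mul]; congr 1; push_cast; ring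
  have e12 : Real.exp (-(12 * y)) = Real.exp (-(2 * y)) ^ 6 := by rw [← Real.exp_nat_mul]; congr 1; push_cast; ring
  rw [e1, e4, e8, e12]
  generalize Real.exp (-(2 * y)) = q at *
  have hp : 0 < q ^ 6 + 7 * q ^ 4 + 7 * q ^ 2 + 1 := by positivity
  constructor
  · have := final_alg hu.1 hu.2 q0 q1 hr
    convert this using 1
    ring
  · have : 4 * (5 * q ^ 4 + 14 * q ^ 2 + 5) / (q ^ 6 + 7 * q ^ 4 + 7 * q ^ 2 + 1) < 20 := by
      rw [div_lt_iff₀ hp]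
      have : 0 < q ^ 2 := by positivity
      have : 0 < q ^ 4 := by positivity
      have : 0 < q ^ 6 := by positivity
      linarith
    linarith
end

section
/- Fix t > 0. The function f(K) = 16^{1/K}·η_K(t)/(t^{1/K}·(1+t)^{K−1/K}) is strictly increasing and convex on [1, ∞), with f(1) = 16 and f(K) → ∞ as K → ∞, so f maps [1, ∞) onto [16, ∞). In particular, for every K > 1, η_K(t) > 16^{1−1/K}·t^{1/K}·(1+t)^{K−1/K}. -/
open Set Filter

open Topology

/-- `ellK` in the variable x = r². -/
noncomputable def kk (x : ℝ) : ℝ :=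
  ∫ θ in (0:ℝ)..(Real.pi / 2), (1 - x * Real.sin θ ^ 2) ^ (-(1/2) : ℝ)

/-- The auxiliary integral B/r² in the variable x = r². -/
noncomputable def bb (x : ℝ) : ℝ :=
  ∫ θ in (0:ℝ)..(Real.pi / 2), Real.cos θ ^ 2 * (1 - x * Real.sin θ ^ 2) ^ (-(1/2) : ℝ)

lemma D_lb {x M θ : ℝ} (hx : x ≤ M) (hM : 0 ≤ M) : 1 - M ≤ 1 - x * Real.sin θ ^ 2 := by
  have h1 := Real.sin_sq_le_one θ
  have h2 := sq_nonneg (Real.sin θ)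
  nlinarith

lemma D_pos {x θ : ℝ} (hx : x < 1) : 0 < 1 - x * Real.sin θ ^ 2 := by
  have h := D_lb (θ := θ) (le_max_left x 0) (le_max_right x 0)
  have : max x 0 < 1 := max_lt hx one_pos
  linarith

lemma D_cont {x : ℝ} (hx : x < 1) (p : ℝ) :
    Continuous (fun θ : ℝ => (1 - x * Real.sin θ ^ 2) ^ p) := by
  refine Continuous.rpow_const (by fun_prop) (fun θ => Or.inl (D_pos hx).ne')

lemma D_half {x θ : ℝ} (hx : x < 1) : (1 - x * Real.sin θ ^ 2) ^ (-(1/2) : ℝ)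
    = (1 - x * Real.sin θ ^ 2) * (1 - x * Real.sin θ ^ 2) ^ (-(3/2) : ℝ) := by
  have h := D_pos (θ := θ) hx
  rw [← Real.rpow_one_add' h.le (by norm_num)]
  norm_num

lemma hasDeriv_gen {g : ℝ → ℝ} (hg : Continuous g) {x : ℝ} (hx : x < 1) :
    HasDerivAt (fun x => ∫ θ in (0:ℝ)..(Real.pi / 2), g θ * (1 - x * Real.sin θ ^ 2) ^ (-(1/2) : ℝ))
      (∫ θ in (0:ℝ)..(Real.pi / 2), g θ * (1 / 2 * Real.sin θ ^ 2 *
        (1 - x * Real.sin θ ^ 2) ^ (-(3/2) : ℝ))) x := by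
  set M := max ((x + 1) / 2) 0 with hMdef
  have hM1 : M < 1 := max_lt (by linarith) one_pos
  have hM0 : 0 ≤ M := le_max_right _ _
  have hs : Iio M ∈ 𝓝 x := Iio_mem_nhds (lt_of_lt_of_le (by linarith) (le_max_left _ _))
  refine (intervalIntegral.hasDerivAt_integral_of_dominated_loc_of_deriv_le
    (F := fun x θ => g θ * (1 - x * Real.sin θ ^ 2) ^ (-(1/2) : ℝ))
    (F' := fun x θ => g θ * (1 / 2 * Real.sin θ ^ 2 * (1 - x * Real.sin θ ^ 2) ^ (-(3/2) : ℝ)))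
    (bound := fun θ => |g θ| * (1 - M) ^ (-(3/2) : ℝ)) hs ?_ ?_ ?_ ?_ ?_ ?_).2
  · filter_upwards [hs] with y hy
    exact (hg.mul (D_cont (lt_trans hy hM1) _)).aestronglyMeasurable
  · exact (hg.mul (D_cont hx _)).intervalIntegrable _ _
  · exact (hg.mul ((continuous_const.mul (by fun_prop)).mul (D_cont hx _))).aestronglyMeasurable
  · refine Eventually.of_forall fun θ _ y hy => ?_
    rw [norm_mul, Real.norm_eq_abs]
    refine mul_le_mul_of_nonneg_left ?_ (abs_nonneg _)
    have h1 := D_lb (θ := θ) (le_of_lt hy) hM0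
    have h2 : (1 - y * Real.sin θ ^ 2) ^ (-(3/2) : ℝ) ≤ (1 - M) ^ (-(3/2) : ℝ) :=
      Real.rpow_le_rpow_of_nonpos (by linarith) h1 (by norm_num)
    have h3 : 0 ≤ (1 - y * Real.sin θ ^ 2) ^ (-(3/2) : ℝ) := Real.rpow_nonneg (by linarith) _
    have h4 := Real.sin_sq_le_one θ
    have h5 := sq_nonneg (Real.sin θ)
    rw [Real.norm_eq_abs, abs_of_nonneg (by positivity)]
    nlinarith
  · exact (hg.abs.mul continuous_const).intervalIntegrable _ _
  · refine Eventually.of_forall fun θ _ y hy => ?_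
    have h1 := D_pos (θ := θ) (lt_trans hy hM1)
    have h2 : HasDerivAt (fun y : ℝ => 1 - y * Real.sin θ ^ 2) (-(Real.sin θ ^ 2)) y := by
      simpa using ((hasDerivAt_id y).mul_const (Real.sin θ ^ 2)).const_sub 1
    have h3 := (h2.rpow_const (p := -(1/2)) (Or.inl h1.ne')).const_mul (g θ)
    refine HasDerivAt.congr_deriv h3 (Eq.symm ?_)
    have : (-(1/2) - 1 : ℝ) = -(3/2) := by norm_num
    rw [this]
    ring

lemma parts {x : ℝ} (hx : x < 1) : ∫ θ in (0:ℝ)..(Real.pi / 2),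
    ((Real.cos θ ^ 2 - Real.sin θ ^ 2) * (1 - x * Real.sin θ ^ 2) ^ (-(1/2) : ℝ) +
      x * Real.sin θ ^ 2 * Real.cos θ ^ 2 * (1 - x * Real.sin θ ^ 2) ^ (-(3/2) : ℝ)) = 0 := by
  have key : ∀ θ : ℝ, HasDerivAt (fun θ => Real.sin θ * Real.cos θ *
      (1 - x * Real.sin θ ^ 2) ^ (-(1/2) : ℝ))
      ((Real.cos θ ^ 2 - Real.sin θ ^ 2) * (1 - x * Real.sin θ ^ 2) ^ (-(1/2) : ℝ) +
      x * Real.sin θ ^ 2 * Real.cos θ ^ 2 * (1 - x * Real.sin θ ^ 2) ^ (-(3/2) : ℝ)) θ := by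
    intro θ
    have h1 := D_pos (θ := θ) hx
    have h2 := ((((Real.hasDerivAt_sin θ).pow 2).const_mul x).const_sub 1).rpow_const
      (p := -(1/2)) (Or.inl h1.ne')
    have h3 := ((Real.hasDerivAt_sin θ).mul (Real.hasDerivAt_cos θ)).mul h2
    refine HasDerivAt.congr_deriv h3 (Eq.symm ?_)
    have : (-(1/2) - 1 : ℝ) = -(3/2) := by norm_num
    rw [this]
    simp
    ring
  rw [intervalIntegral.integral_eq_sub_of_hasDerivAt (fun θ _ => key θ)]
  · simp
  · apply Continuous.intervalIntegrable
    exact (Continuous.mul (by fun_prop) (D_cont hx _)).add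
      (Continuous.mul (by fun_prop) (D_cont hx _))

lemma kk_deriv {x : ℝ} (hx : x < 1) : HasDerivAt kk (bb x / (2 * (1 - x))) x := by
  have h := hasDeriv_gen (g := fun _ => 1) continuous_const hx
  simp only [one_mul] at h
  change HasDerivAt kk _ x at h
  refine HasDerivAt.congr_deriv h (Eq.symm ?_)
  have hx' : 1 - x ≠ 0 := by linarith
  have hp := parts hx
  rw [bb, div_eq_iff (by positivity)]
  have e : ∀ θ : ℝ, (Real.cos θ ^ 2 - Real.sin θ ^ 2) * (1 - x * Real.sin θ ^ 2) ^ (-(1/2) : ℝ) +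
      x * Real.sin θ ^ 2 * Real.cos θ ^ 2 * (1 - x * Real.sin θ ^ 2) ^ (-(3/2) : ℝ)
      = Real.cos θ ^ 2 * (1 - x * Real.sin θ ^ 2) ^ (-(1/2) : ℝ) -
      (1 / 2 * Real.sin θ ^ 2 * (1 - x * Real.sin θ ^ 2) ^ (-(3/2) : ℝ)) * (2 * (1 - x)) := by
    intro θ
    rw [D_half hx, Real.cos_sq']
    ring
  simp_rw [e] at hp
  rw [intervalIntegral.integral_sub, intervalIntegral.integral_mul_const] at hp
  · linarith
  · exact (Continuous.mul (by fun_prop) (D_cont hx _)).intervalIntegrable _ _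
  · exact ((Continuous.mul (by fun_prop) (D_cont hx _)).mul continuous_const).intervalIntegrable _ _

lemma bb_diff {x : ℝ} (hx : x < 1) : DifferentiableAt ℝ bb x :=
  (hasDeriv_gen (g := fun θ => Real.cos θ ^ 2) (by fun_prop) hx).differentiableAt

lemma xbb_deriv {x : ℝ} (hx : x < 1) : HasDerivAt (fun x => x * bb x) (kk x / 2) x := by
  have h := hasDeriv_gen (g := fun θ => Real.cos θ ^ 2) (by fun_prop) hx
  have h2 := (hasDerivAt_id x).mul h
  change HasDerivAt (fun x => x * bb x) _ x at h2
  refine HasDerivAt.congr_deriv h2 (Eq.symm ?_)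
  have hp := parts hx
  simp only [id, one_mul]
  rw [← intervalIntegral.integral_const_mul, ← intervalIntegral.integral_add]
  · have e : ∀ θ : ℝ, (Real.cos θ ^ 2 - Real.sin θ ^ 2) * (1 - x * Real.sin θ ^ 2) ^ (-(1/2) : ℝ) +
      x * Real.sin θ ^ 2 * Real.cos θ ^ 2 * (1 - x * Real.sin θ ^ 2) ^ (-(3/2) : ℝ)
      = (Real.cos θ ^ 2 * (1 - x * Real.sin θ ^ 2) ^ (-(1/2) : ℝ) + x *
        (Real.cos θ ^ 2 * (1 / 2 * Real.sin θ ^ 2 * (1 - x * Real.sin θ ^ 2) ^ (-(3/2) : ℝ)))) * 2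
       - (1 - x * Real.sin θ ^ 2) ^ (-(1/2) : ℝ) := by
      intro θ
      rw [Real.cos_sq']
      ring
    simp_rw [e] at hp
    rw [intervalIntegral.integral_sub, intervalIntegral.integral_mul_const] at hp
    · rw [kk]; linarith
    · refine (((Continuous.mul (by fun_prop) (D_cont hx _)).add (continuous_const.mul
        (Continuous.mul (by fun_prop) (Continuous.mul (by fun_prop) (D_cont hx _))))).mul
          continuous_const).intervalIntegrable _ _
    · exact (D_cont hx _).intervalIntegrable _ _
  · exact (Continuous.mul (by fun_prop) (D_cont hx _)).intervalIntegrable _ _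
  · exact (continuous_const.mul
        (Continuous.mul (by fun_prop) (Continuous.mul (by fun_prop) (D_cont hx _)))).intervalIntegrable _ _

lemma bb_deriv {x : ℝ} (hx0 : 0 < x) (hx : x < 1) :
    HasDerivAt bb ((kk x / 2 - bb x) / x) x := by
  have h := (bb_diff hx).hasDerivAt
  have h2 := ((hasDerivAt_id x).mul h).unique (xbb_deriv hx)
  simp only [id, one_mul] at h2
  refine HasDerivAt.congr_deriv h (Eq.symm ?_)
  rw [div_eq_iff hx0.ne']
  linarith

lemma D_inv {x θ : ℝ} (hx : x < 1) : (1 - x * Real.sin θ ^ 2) ^ (-(1/2) : ℝ)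
    = (Real.sqrt (1 - x * Real.sin θ ^ 2))⁻¹ := by
  rw [Real.rpow_neg (D_pos hx).le, Real.sqrt_eq_rpow]

lemma pi2 : (0:ℝ) ≤ Real.pi / 2 := by positivity

lemma one_le_D {x θ : ℝ} (hx0 : 0 ≤ x) (hx : x < 1) :
    1 ≤ (1 - x * Real.sin θ ^ 2) ^ (-(1/2) : ℝ) := by
  refine Real.one_le_rpow_of_pos_of_le_one_of_nonpos (D_pos hx) ?_ (by norm_num)
  have := sq_nonneg (Real.sin θ)
  nlinarith

lemma kk_ge {x : ℝ} (hx0 : 0 ≤ x) (hx : x < 1) : Real.pi / 2 ≤ kk x := by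
  have h := intervalIntegral.integral_mono_on (μ := MeasureTheory.volume) pi2
    (f := fun _ => (1:ℝ)) (g := fun θ => (1 - x * Real.sin θ ^ 2) ^ (-(1/2) : ℝ))
    (continuous_const.intervalIntegrable _ _) ((D_cont hx _).intervalIntegrable _ _)
    (fun θ _ => one_le_D hx0 hx)
  simpa [kk] using h

lemma kk_pos {x : ℝ} (hx0 : 0 ≤ x) (hx : x < 1) : 0 < kk x :=
  lt_of_lt_of_le (by positivity) (kk_ge hx0 hx)

lemma kk_zero : kk 0 = Real.pi / 2 := by simp [kk]

lemma bb_int {x : ℝ} (hx : x < 1) : IntervalIntegrable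
    (fun θ => Real.cos θ ^ 2 * (1 - x * Real.sin θ ^ 2) ^ (-(1/2) : ℝ)) MeasureTheory.volume 0
      (Real.pi / 2) :=
  (Continuous.mul (by fun_prop) (D_cont hx _)).intervalIntegrable _ _

lemma bb_pos {x : ℝ} (hx0 : 0 ≤ x) (hx : x < 1) : 0 < bb x := by
  have h := intervalIntegral.integral_mono_on (μ := MeasureTheory.volume) pi2
    (f := fun θ => Real.cos θ ^ 2)
    (g := fun θ => Real.cos θ ^ 2 * (1 - x * Real.sin θ ^ 2) ^ (-(1/2) : ℝ))
    (Continuous.intervalIntegrable (by fun_prop) _ _) (bb_int hx)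
    (fun θ _ => le_mul_of_one_le_right (sq_nonneg _) (one_le_D hx0 hx))
  rw [integral_cos_sq] at h
  change _ ≤ bb x at h
  refine lt_of_lt_of_le ?_ h
  simp
  positivity

lemma sq_D {x θ : ℝ} : 1 - x * Real.sin θ ^ 2 = Real.cos θ ^ 2 + (1 - x) * Real.sin θ ^ 2 := by
  rw [Real.cos_sq']; ring

lemma cos_nn {θ : ℝ} (h : θ ∈ Icc (0:ℝ) (Real.pi / 2)) : 0 ≤ Real.cos θ :=
  Real.cos_nonneg_of_mem_Icc ⟨by linarith [h.1, pi2], h.2⟩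

lemma sin_nn {θ : ℝ} (h : θ ∈ Icc (0:ℝ) (Real.pi / 2)) : 0 ≤ Real.sin θ :=
  Real.sin_nonneg_of_nonneg_of_le_pi h.1 (by linarith [h.2, pi2])

lemma cos_le_sqrtD {x θ : ℝ} (hx : x < 1) :
    Real.cos θ ≤ Real.sqrt (1 - x * Real.sin θ ^ 2) := by
  apply Real.le_sqrt_of_sq_le
  rw [sq_D]
  have := sq_nonneg (Real.sin θ)
  nlinarith

lemma sqrtD_le {x θ : ℝ} (hx : x < 1) (h : θ ∈ Icc (0:ℝ) (Real.pi / 2)) :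
    Real.sqrt (1 - x * Real.sin θ ^ 2) ≤ Real.cos θ + Real.sqrt (1 - x) := by
  have h1 := cos_nn h
  have h2 := Real.sqrt_nonneg (1 - x)
  have h3 := Real.sq_sqrt (show 0 ≤ 1 - x by linarith)
  apply Real.sqrt_le_iff.2 ⟨by positivity, ?_⟩
  rw [sq_D]
  have h4 := Real.sin_sq_le_one θ
  nlinarith [mul_nonneg h1 h2]

lemma bb_le {x : ℝ} (hx : x < 1) : bb x ≤ 1 := by
  have h := intervalIntegral.integral_mono_on (μ := MeasureTheory.volume) pi2
    (g := fun θ => Real.cos θ)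
    (f := fun θ => Real.cos θ ^ 2 * (1 - x * Real.sin θ ^ 2) ^ (-(1/2) : ℝ))
    (bb_int hx) (Continuous.intervalIntegrable (by fun_prop) _ _)
    (fun θ hθ => by
      have h1 := cos_nn hθ
      have h2 := cos_le_sqrtD (θ := θ) hx
      have h3 : 0 < Real.sqrt (1 - x * Real.sin θ ^ 2) := Real.sqrt_pos.2 (D_pos hx)
      rw [D_inv hx, ← div_eq_mul_inv, div_le_iff₀ h3]
      nlinarith)
  simpa [bb] using h

lemma bb_lb {x : ℝ} (hx : x < 1) : 1 - Real.sqrt (1 - x) * (Real.pi / 2) ≤ bb x := by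
  have h := intervalIntegral.integral_mono_on (μ := MeasureTheory.volume) pi2
    (f := fun θ => Real.cos θ - Real.sqrt (1 - x))
    (g := fun θ => Real.cos θ ^ 2 * (1 - x * Real.sin θ ^ 2) ^ (-(1/2) : ℝ))
    (Continuous.intervalIntegrable (by fun_prop) _ _) (bb_int hx)
    (fun θ hθ => by
      have h1 := cos_nn hθ
      have h2 := sqrtD_le hx hθ
      have h3 : 0 < Real.sqrt (1 - x * Real.sin θ ^ 2) := Real.sqrt_pos.2 (D_pos hx)
      have h4 : 0 < Real.sqrt (1 - x) := Real.sqrt_pos.2 (by linarith)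
      rw [D_inv hx, ← div_eq_mul_inv, le_div_iff₀ h3]
      rcases le_total (Real.cos θ) (Real.sqrt (1 - x)) with h5 | h5
      · nlinarith
      · nlinarith)
  rw [intervalIntegral.integral_sub (Continuous.intervalIntegrable (by fun_prop) _ _)
    (Continuous.intervalIntegrable (by fun_prop) _ _)] at h
  simp at h
  rw [bb]
  norm_num at h ⊢
  linarith

lemma bb_le_half {x : ℝ} (hx0 : 0 ≤ x) (hx : x < 1) : bb x ≤ kk x / 2 := by
  have ci : IntervalIntegrable (fun θ => 1 / 2 * (1 - x * Real.sin θ ^ 2) ^ (-(1/2) : ℝ))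
      MeasureTheory.volume 0 (Real.pi / 2) :=
    (continuous_const.mul (D_cont hx _)).intervalIntegrable _ _
  have h := intervalIntegral.integral_mono_on (μ := MeasureTheory.volume) pi2
    (g := fun θ => (Real.cos θ ^ 2 - 1 / 2) * (1 - x * (1 / 2)) ^ (-(1/2) : ℝ))
    (f := fun θ => Real.cos θ ^ 2 * (1 - x * Real.sin θ ^ 2) ^ (-(1/2) : ℝ) -
      1 / 2 * (1 - x * Real.sin θ ^ 2) ^ (-(1/2) : ℝ))
    ((bb_int hx).sub ci)
    (Continuous.intervalIntegrable (by fun_prop) _ _)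
    (fun θ hθ => by
      have hh := D_pos (θ := θ) hx
      rw [← sub_mul, Real.cos_sq']
      rcases le_total (Real.sin θ ^ 2) (1 / 2) with h5 | h5
      · refine mul_le_mul_of_nonneg_left ?_ (by linarith)
        refine Real.rpow_le_rpow_of_nonpos (by linarith) ?_ (by norm_num)
        nlinarith
      · refine mul_le_mul_of_nonpos_left ?_ (by linarith)
        refine Real.rpow_le_rpow_of_nonpos (by linarith) ?_ (by norm_num)
        nlinarith)
  rw [intervalIntegral.integral_sub (bb_int hx)
    ci,
    intervalIntegral.integral_const_mul, intervalIntegral.integral_mul_const,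
    intervalIntegral.integral_sub (Continuous.intervalIntegrable (by fun_prop) _ _)
    (Continuous.intervalIntegrable (by fun_prop) _ _), integral_cos_sq] at h
  simp only [intervalIntegral.integral_const, Real.cos_pi_div_two, Real.sin_zero, smul_eq_mul] at h
  ring_nf at h
  rw [bb, kk]
  ring_nf
  linarith

lemma sqrt_kk_le {x : ℝ} (hx0 : 0 ≤ x) (hx : x < 1) : Real.sqrt (1 - x) * kk x ≤ Real.pi / 2 := by
  have h := intervalIntegral.integral_mono_on (μ := MeasureTheory.volume) pi2
    (g := fun _ => (1:ℝ)) (f := fun θ => Real.sqrt (1 - x) * (1 - x * Real.sin θ ^ 2) ^ (-(1/2) : ℝ))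
    ((continuous_const.mul (D_cont hx _)).intervalIntegrable _ _)
     (continuous_const.intervalIntegrable _ _)
    (fun θ _ => by
      have h3 : 0 < Real.sqrt (1 - x * Real.sin θ ^ 2) := Real.sqrt_pos.2 (D_pos hx)
      rw [D_inv hx, ← div_eq_mul_inv, div_le_iff₀ h3, one_mul]
      apply Real.sqrt_le_sqrt
      have := Real.sin_sq_le_one θ
      nlinarith)
  rw [intervalIntegral.integral_const_mul] at h
  simpa [kk] using h

lemma kk_upper {x : ℝ} (hx0 : 0 < x) (hx : x < 1) : kk (1 - x) ≤
    (Real.sqrt (1 - x))⁻¹ * Real.arsinh (Real.sqrt (1 - x) / Real.sqrt x) + Real.log 2 ∧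
    (Real.sqrt (1 - x))⁻¹ * Real.arsinh (Real.sqrt (1 - x) / Real.sqrt x) + Real.log 2
      - Real.sqrt x * (Real.pi / 2) ≤ kk (1 - x) := by
  set p := Real.sqrt (1 - x) with hp
  set r := Real.sqrt x with hr
  have hp0 : 0 < p := Real.sqrt_pos.2 (by linarith)
  have hr0 : 0 < r := Real.sqrt_pos.2 hx0
  have hp2 : p ^ 2 = 1 - x := Real.sq_sqrt (by linarith)
  have hr2 : r ^ 2 = x := Real.sq_sqrt (by linarith)
  have hx1 : 1 - x < 1 := by linarith
  have I1 : ∫ θ in (0:ℝ)..(Real.pi / 2), Real.sin θ * (1 - (1 - x) * Real.sin θ ^ 2) ^ (-(1/2) : ℝ)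
      = p⁻¹ * Real.arsinh (p / r) := by
    have key : ∀ θ : ℝ, HasDerivAt (fun θ => -(p⁻¹ * Real.arsinh (p / r * Real.cos θ)))
       (Real.sin θ * (1 - (1 - x) * Real.sin θ ^ 2) ^ (-(1/2) : ℝ)) θ := by
      intro θ
      refine (((((Real.hasDerivAt_cos θ).const_mul (p / r)).arsinh).const_mul p⁻¹).neg).congr_deriv ?_
      rw [D_inv hx1]
      have : 1 + (p / r * Real.cos θ) ^ 2 = (1 - (1 - x) * Real.sin θ ^ 2) / r ^ 2 := by
        field_simp
        rw [hp2, hr2, Real.sin_sq]; ring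
      rw [this, Real.sqrt_div (D_pos hx1).le, Real.sqrt_sq hr0.le]
      have h3 : 0 < Real.sqrt (1 - (1 - x) * Real.sin θ ^ 2) := Real.sqrt_pos.2 (D_pos hx1)
      simp only [smul_eq_mul]
      field_simp
    rw [intervalIntegral.integral_eq_sub_of_hasDerivAt (fun θ _ => key θ)]
    · simp
    · exact (Continuous.mul (by fun_prop) (D_cont hx1 _)).intervalIntegrable _ _
  have sp : ∀ θ ∈ uIcc (0:ℝ) (Real.pi / 2), 0 < 1 + Real.sin θ := by
    intro θ hθ
    rw [uIcc_of_le pi2] at hθ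
    linarith [sin_nn hθ]
  have c2 : IntervalIntegrable (fun θ => Real.cos θ / (1 + Real.sin θ)) MeasureTheory.volume 0
      (Real.pi / 2) := by
    apply ContinuousOn.intervalIntegrable
    exact ContinuousOn.div (by fun_prop) (by fun_prop) (fun θ hθ => (sp θ hθ).ne')
  have I2 : ∫ θ in (0:ℝ)..(Real.pi / 2), Real.cos θ / (1 + Real.sin θ) = Real.log 2 := by
    rw [intervalIntegral.integral_eq_sub_of_hasDerivAt (f := fun θ => Real.log (1 + Real.sin θ))
      (fun θ hθ => ((Real.hasDerivAt_sin θ).const_add 1).log (sp θ hθ).ne') c2]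
    norm_num
  have c1 : IntervalIntegrable (fun θ => Real.sin θ * (1 - (1 - x) * Real.sin θ ^ 2) ^ (-(1/2) : ℝ))
     MeasureTheory.volume 0 (Real.pi / 2) :=
    (Continuous.mul (by fun_prop) (D_cont hx1 _)).intervalIntegrable _ _
  have c3 : IntervalIntegrable (fun _ => r) MeasureTheory.volume 0 (Real.pi / 2) :=
    continuous_const.intervalIntegrable _ _
  have c0 := (D_cont hx1 (-(1/2))).intervalIntegrable (μ := MeasureTheory.volume) 0 (Real.pi / 2)
  constructor
  · have h := intervalIntegral.integral_mono_on (μ := MeasureTheory.volume) pi2 c0 (c1.add c2)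
      (fun θ hθ => by
        have h1 := cos_nn hθ
        have h0 := sin_nn hθ
        have h2 := cos_le_sqrtD (θ := θ) hx1
        have h3 : 0 < Real.sqrt (1 - (1 - x) * Real.sin θ ^ 2) := Real.sqrt_pos.2 (D_pos hx1)
        have h4 := Real.cos_sq' θ
        rw [D_inv hx1]
        have : (1 - Real.sin θ) * (Real.sqrt (1 - (1 - x) * Real.sin θ ^ 2))⁻¹ ≤
            Real.cos θ / (1 + Real.sin θ) := by
          rw [← div_eq_mul_inv, div_le_div_iff₀ h3 (by linarith)]
          nlinarith
        linarith)
    rw [intervalIntegral.integral_add c1 c2, I1, I2] at h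
    exact h
  · have h := intervalIntegral.integral_mono_on (μ := MeasureTheory.volume) pi2 ((c1.add c2).sub c3) c0
      (fun θ hθ => by
        have h1 := cos_nn hθ
        have h0 := sin_nn hθ
        have h2 := sqrtD_le hx1 hθ
        rw [sub_sub_cancel, ← hr] at h2
        have h3 : 0 < Real.sqrt (1 - (1 - x) * Real.sin θ ^ 2) := Real.sqrt_pos.2 (D_pos hx1)
        have h4 := Real.cos_sq' θ
        rw [D_inv hx1]
        have : Real.cos θ / (1 + Real.sin θ) - r ≤
          (1 - Real.sin θ) * (Real.sqrt (1 - (1 - x) * Real.sin θ ^ 2))⁻¹ := by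
          have e1 : (1 - Real.sin θ) = Real.cos θ ^ 2 / (1 + Real.sin θ) := by
            rw [eq_div_iff (by linarith)]; linarith
          have e2 : Real.cos θ - r ≤ Real.cos θ ^ 2 * (Real.sqrt (1 - (1 - x) * Real.sin θ ^ 2))⁻¹ := by
            rw [← div_eq_mul_inv, le_div_iff₀ h3]
            rcases le_total (Real.cos θ) r with h5 | h5
            · nlinarith
            · nlinarith
          have e3 : (Real.cos θ - r) / (1 + Real.sin θ) ≤
             (Real.cos θ ^ 2 * (Real.sqrt (1 - (1 - x) * Real.sin θ ^ 2))⁻¹) / (1 + Real.sin θ) := by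
            gcongr
          have e4 : r / (1 + Real.sin θ) ≤ r := div_le_self hr0.le (by linarith)
          rw [e1, div_mul_eq_mul_div]
          rw [sub_div] at e3
          linarith
        linarith)
    rw [intervalIntegral.integral_sub (c1.add c2) c3, intervalIntegral.integral_add c1 c2, I1, I2] at h
    simp only [intervalIntegral.integral_const, smul_eq_mul, sub_zero] at h
    rw [kk]
    linarith

lemma kk_asym : Tendsto (fun x => kk (1 - x) + 1 / 2 * Real.log x) (𝓝[>] 0) (𝓝 (Real.log 4)) := by
  have hJ : ∀ x ∈ Ioo (0:ℝ) 1, (Real.sqrt (1 - x))⁻¹ * Real.arsinh (Real.sqrt (1 - x) / Real.sqrt x)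
      + 1 / 2 * Real.log x = (Real.sqrt (1 - x))⁻¹ * Real.log (1 + Real.sqrt (1 - x)) -
      x * Real.log x * (2 * Real.sqrt (1 - x) * (1 + Real.sqrt (1 - x)))⁻¹ := by
    intro x hx
    have hp0 : 0 < Real.sqrt (1 - x) := Real.sqrt_pos.2 (by linarith [hx.2])
    have hr0 : 0 < Real.sqrt x := Real.sqrt_pos.2 hx.1
    have hp2 : Real.sqrt (1 - x) ^ 2 = 1 - x := Real.sq_sqrt (by linarith [hx.2])
    have hr2 : Real.sqrt x ^ 2 = x := Real.sq_sqrt hx.1.le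
    have hl : Real.log (Real.sqrt x) = 1 / 2 * Real.log x := by
      rw [Real.log_sqrt hx.1.le]; ring
    set p := Real.sqrt (1 - x)
    set r := Real.sqrt x
    have e : Real.arsinh (p / r) = Real.log (1 + p) - 1 / 2 * Real.log x := by
      rw [Real.arsinh, ← hl, ← Real.log_div (by positivity) (by positivity)]
      congr 1
      have : 1 + (p / r) ^ 2 = (1 / r) ^ 2 := by field_simp; linarith
      rw [this, Real.sqrt_sq (by positivity)]
      field_simp
      ring
    rw [e]
    have : x = (1 - p) * (1 + p) := by linarith
    have e2 : x * (2 * p * (1 + p))⁻¹ = 1 / 2 * p⁻¹ - 1 / 2 := by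
      rw [this]; field_simp; try ring
    have e3 : x * Real.log x * (2 * p * (1 + p))⁻¹ = (x * (2 * p * (1 + p))⁻¹) * Real.log x := by ring
    rw [e3, e2]; ring
  have hc : ContinuousAt (fun x => (Real.sqrt (1 - x))⁻¹ * Real.log (1 + Real.sqrt (1 - x)) -
      x * Real.log x * (2 * Real.sqrt (1 - x) * (1 + Real.sqrt (1 - x)))⁻¹ + Real.log 2) 0 := by
    have := Real.continuous_mul_log.continuousAt (x := 0)
    have h2 : ContinuousAt (fun x : ℝ => Real.sqrt (1 - x)) 0 := by fun_prop
    refine ((ContinuousAt.mul (h2.inv₀ (by simp)) ((h2.const_add 1).log (by simp))).sub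
      (this.mul (ContinuousAt.inv₀ ((h2.const_mul 2).mul (h2.const_add 1)) (by simp)))).add
        continuousAt_const
  have hc1 := hc.tendsto.mono_left (nhdsWithin_le_nhds (s := Ioi 0))
  have hc2 : Tendsto (fun x => Real.sqrt x * (Real.pi / 2)) (𝓝[>] 0) (𝓝 0) := by
    have : ContinuousAt (fun x : ℝ => Real.sqrt x * (Real.pi / 2)) 0 := by fun_prop
    simpa using this.tendsto.mono_left (nhdsWithin_le_nhds (s := Ioi 0))
  have l4 : Real.log 4 = Real.log 2 + Real.log 2 := by
    rw [← Real.log_mul (by norm_num) (by norm_num)]; norm_num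
  have v : (Real.sqrt (1 - 0))⁻¹ * Real.log (1 + Real.sqrt (1 - 0)) -
      0 * Real.log 0 * (2 * Real.sqrt (1 - 0) * (1 + Real.sqrt (1 - 0)))⁻¹ + Real.log 2 = Real.log 4 := by
    rw [l4]; norm_num
  rw [v] at hc1
  have hc3 := hc1.sub hc2
  rw [sub_zero] at hc3
  have hm : Ioo (0:ℝ) 1 ∈ 𝓝[>] (0:ℝ) := Ioo_mem_nhdsGT one_pos
  refine tendsto_of_tendsto_of_tendsto_of_le_of_le' hc3 hc1 ?_ ?_
  · filter_upwards [hm] with x hx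
    have := (kk_upper hx.1 hx.2).2
    have := hJ x hx
    linarith
  · filter_upwards [hm] with x hx
    have := (kk_upper hx.1 hx.2).1
    have := hJ x hx
    linarith

lemma hm01 : Ioo (0:ℝ) 1 ∈ 𝓝[>] (0:ℝ) := Ioo_mem_nhdsGT one_pos

lemma kk1_deriv {x : ℝ} (hx : 0 < x) : HasDerivAt (fun x => kk (1 - x)) (-(bb (1 - x) / (2 * x))) x := by
  have h := (kk_deriv (show 1 - x < 1 by linarith)).comp_const_sub 1 x
  simpa using h

lemma xbb1_deriv {x : ℝ} (hx : 0 < x) :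
    HasDerivAt (fun x => (1 - x) * bb (1 - x)) (-(kk (1 - x) / 2)) x :=
  (xbb_deriv (show 1 - x < 1 by linarith)).comp_const_sub 1 x

lemma kk_tend0 : Tendsto kk (𝓝[>] 0) (𝓝 (Real.pi / 2)) := by
  have := (kk_deriv (x := 0) one_pos).continuousAt.tendsto
  rw [kk_zero] at this
  exact this.mono_left nhdsWithin_le_nhds

lemma legendre {x : ℝ} (hx0 : 0 < x) (hx : x < 1) :
    x * bb x * kk (1 - x) + (1 - x) * bb (1 - x) * kk x = Real.pi / 2 := by
  set L : ℝ → ℝ := fun x => x * bb x * kk (1 - x) + (1 - x) * bb (1 - x) * kk x with hL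
  have hd : ∀ y ∈ Ioo (0:ℝ) 1, HasDerivAt L 0 y := by
    intro y hy
    have h := ((xbb_deriv hy.2).mul (kk1_deriv hy.1)).add ((xbb1_deriv hy.1).mul (kk_deriv hy.2))
    refine h.congr_deriv ?_
    have := hy.1
    have : 0 < 1 - y := by linarith [hy.2]
    field_simp
    ring
  have hcst : ∀ y ∈ Ioo (0:ℝ) 1, L y = L x := by
    intro y hy
    refine (convex_Ioo (0:ℝ) 1).is_const_of_fderivWithin_eq_zero (𝕜 := ℝ)
      (fun z hz => (hd z hz).differentiableAt.differentiableWithinAt) (fun z hz => ?_) hy ⟨hx0, hx⟩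
    rw [fderivWithin_of_isOpen isOpen_Ioo hz]
    ext
    simpa using (hd z hz).deriv
  have t1 : Tendsto (fun y => y * bb y * kk (1 - y)) (𝓝[>] 0) (𝓝 0) := by
    have h1 : Tendsto bb (𝓝[>] 0) (𝓝 (bb 0)) :=
      (bb_diff (x := 0) one_pos).continuousAt.tendsto.mono_left nhdsWithin_le_nhds
    have h2 : Tendsto (fun y : ℝ => y) (𝓝[>] 0) (𝓝 0) := nhdsWithin_le_nhds
    have h3 : Tendsto (fun y : ℝ => y * Real.log y) (𝓝[>] 0) (𝓝 0) := by
      simpa using (Real.continuous_mul_log.tendsto 0).mono_left (nhdsWithin_le_nhds (s := Ioi 0))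
    have h4 := h1.mul ((h2.mul kk_asym).sub (h3.const_mul (1 / 2)))
    simp only [zero_mul, mul_zero, sub_zero] at h4
    refine h4.congr fun y => ?_
    ring
  have t2 : Tendsto (fun y => (1 - y) * bb (1 - y)) (𝓝[>] 0) (𝓝 1) := by
    have hl : Tendsto (fun y : ℝ => (1 - y) * (1 - Real.sqrt y * (Real.pi / 2))) (𝓝[>] 0) (𝓝 1) := by
      have : ContinuousAt (fun y : ℝ => (1 - y) * (1 - Real.sqrt y * (Real.pi / 2))) 0 := by fun_prop
      simpa using this.tendsto.mono_left (nhdsWithin_le_nhds (s := Ioi 0))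
    refine tendsto_of_tendsto_of_tendsto_of_le_of_le' hl tendsto_const_nhds ?_ ?_
    · filter_upwards [hm01] with y hy
      have := bb_lb (show 1 - y < 1 by linarith [hy.1])
      rw [sub_sub_cancel] at this
      exact mul_le_mul_of_nonneg_left this (by linarith [hy.2])
    · filter_upwards [hm01] with y hy
      have := bb_le (show 1 - y < 1 by linarith [hy.1])
      nlinarith [hy.1, hy.2]
  have t3 := t1.add (t2.mul kk_tend0)
  have t4 : Tendsto L (𝓝[>] 0) (𝓝 (L x)) := by
    refine tendsto_const_nhds.congr' ?_
    filter_upwards [hm01] with y hy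
    exact (hcst y hy).symm
  have := tendsto_nhds_unique t4 t3
  simpa using this

lemma strictMono_aux {f f' : ℝ → ℝ} {a b : ℝ} (h : ∀ x ∈ Ioo a b, HasDerivAt f (f' x) x)
    (h2 : ∀ x ∈ Ioo a b, 0 < f' x) : StrictMonoOn f (Ioo a b) :=
  strictMonoOn_of_deriv_pos (convex_Ioo a b) (fun x hx => (h x hx).continuousAt.continuousWithinAt)
    (fun x hx => by
      rw [interior_Ioo] at hx
      rw [(h x hx).deriv]; exact h2 x hx)

lemma mono_aux {f f' : ℝ → ℝ} {a b : ℝ} (h : ∀ x ∈ Ioo a b, HasDerivAt f (f' x) x)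
    (h2 : ∀ x ∈ Ioo a b, 0 ≤ f' x) : MonotoneOn f (Ioo a b) :=
  monotoneOn_of_deriv_nonneg (convex_Ioo a b) (fun x hx => (h x hx).continuousAt.continuousWithinAt)
    (fun x hx => by
      rw [interior_Ioo] at hx
      exact (h x hx).differentiableAt.differentiableWithinAt)
    (fun x hx => by
      rw [interior_Ioo] at hx
      rw [(h x hx).deriv]; exact h2 x hx)

/-- Bound on the product of x b and the cube of the complementary integral. -/
lemma ineqB {x : ℝ} (hx0 : 0 < x) (hx : x < 1) : x * bb x * kk (1 - x) ^ 3 < (Real.pi / 2) ^ 3 := by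
  have hm : StrictMonoOn (fun x => x * bb x * kk (1 - x) ^ 3) (Ioo 0 1) := by
    refine strictMono_aux (fun y hy => (xbb_deriv hy.2).mul ((kk1_deriv hy.1).pow 3)) ?_
    intro y hy
    have h1 : 0 < y := hy.1
    have h2 : 0 < 1 - y := by linarith [hy.2]
    have k1 := kk_pos hy.1.le hy.2
    have k2 := kk_pos h2.le (by linarith)
    have b1 := bb_pos hy.1.le hy.2
    have b2 := bb_pos h2.le (by linarith)
    have c1 := bb_le_half hy.1.le hy.2
    have c2 := bb_le_half h2.le (by linarith)
    have e : 0 < kk (1 - y) ^ 2 / 2 * (kk y * kk (1 - y) - 3 * (bb y * bb (1 - y))) := by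
      have := mul_le_mul c1 c2 b2.le (by positivity)
      have := mul_pos k1 k2
      refine mul_pos (by positivity) (by nlinarith)
    refine lt_of_lt_of_eq e ?_
    field_simp
    push_cast
    ring
  set z := (x + 1) / 2
  have hz : z ∈ Ioo (0:ℝ) 1 := ⟨by simp only [z]; linarith, by simp only [z]; linarith⟩
  refine lt_of_lt_of_le (hm ⟨hx0, hx⟩ hz (by simp only [z]; linarith)) ?_
  have ht : Tendsto (fun u => kk u ^ 3) (𝓝[>] 0) (𝓝 ((Real.pi / 2) ^ 3)) := kk_tend0.pow 3
  refine ge_of_tendsto ht ?_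
  have hz2 : Ioo (0:ℝ) (1 - z) ∈ 𝓝[>] (0:ℝ) := Ioo_mem_nhdsGT (by linarith [hz.2])
  filter_upwards [hz2] with u hu
  have hu1 : 1 - u ∈ Ioo (0:ℝ) 1 := ⟨by linarith [hu.2, hz.1], by linarith [hu.1]⟩
  have h1 := hm hz hu1 (by linarith [hu.2])
  refine h1.le.trans ?_
  simp only [sub_sub_cancel]
  have k2 := kk_pos (x := u) hu.1.le (by linarith [hu.2, hz.1])
  have : (1 - u) * bb (1 - u) ≤ 1 := by
    have := bb_le hu1.2
    have := bb_pos hu1.1.le hu1.2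
    nlinarith [hu1.2]
  have : 0 < kk u ^ 3 := by positivity
  nlinarith

/-- μ in the variable x = r². -/
noncomputable def mm (x : ℝ) : ℝ := Real.pi / 2 * kk (1 - x) / kk x

lemma mm_deriv {x : ℝ} (hx0 : 0 < x) (hx : x < 1) :
    HasDerivAt mm (-(Real.pi ^ 2 / (8 * x * (1 - x) * kk x ^ 2))) x := by
  have k1 := kk_pos hx0.le hx
  have h := ((kk1_deriv hx0).const_mul (Real.pi / 2)).div (kk_deriv hx) k1.ne'
  refine HasDerivAt.congr_deriv (f := mm) h ?_
  have h1 : 0 < 1 - x := by linarith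
  have hl := legendre hx0 hx
  field_simp
  linear_combination (-8) * hl

lemma mm_pos {x : ℝ} (hx0 : 0 < x) (hx : x < 1) : 0 < mm x := by
  have k1 := kk_pos hx0.le hx
  have k2 := kk_pos (x := 1 - x) (by linarith) (by linarith)
  have := Real.pi_pos
  rw [mm]; positivity

/-- μ(r) ≤ log (4/r) -/
lemma ineqC {x : ℝ} (hx0 : 0 < x) (hx : x < 1) : mm x ≤ Real.log 4 - 1 / 2 * Real.log x := by
  have hm : MonotoneOn (fun x => -(mm x + 1 / 2 * Real.log x)) (Ioo 0 1) := by
    refine mono_aux (fun y hy => ((mm_deriv hy.1 hy.2).add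
      ((Real.hasDerivAt_log hy.1.ne').const_mul (1 / 2))).neg) ?_
    intro y hy
    have h1 : 0 < y := hy.1
    have h2 : 0 < 1 - y := by linarith [hy.2]
    have k1 := kk_pos hy.1.le hy.2
    have h3 := sqrt_kk_le hy.1.le hy.2
    have h4 : (1 - y) * kk y ^ 2 ≤ (Real.pi / 2) ^ 2 := by
      have := pow_le_pow_left₀ (by positivity) h3 2
      rwa [mul_pow, Real.sq_sqrt h2.le] at this
    rw [neg_add, neg_neg, ← sub_eq_add_neg, sub_nonneg, ← one_div, div_mul_div_comm,
      div_le_div_iff₀ (by positivity) (by positivity)]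
    nlinarith
  have hlim : Tendsto (fun y => kk (1 - y) + 1 / 2 * Real.log y) (𝓝[>] 0) (𝓝 (Real.log 4)) := kk_asym
  have : mm x + 1 / 2 * Real.log x ≤ Real.log 4 := by
    refine ge_of_tendsto hlim ?_
    have hz2 : Ioo (0:ℝ) x ∈ 𝓝[>] (0:ℝ) := Ioo_mem_nhdsGT hx0
    filter_upwards [hz2] with u hu
    have h1 := hm ⟨hu.1, hu.2.trans hx⟩ ⟨hx0, hx⟩ hu.2.le
    simp only at h1
    have h2 : mm u ≤ kk (1 - u) := by
      have hu1 := hu.2.trans hx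
      have k2 := kk_pos (x := 1 - u) (by linarith) (by linarith [hu.1])
      have k3 := kk_ge hu.1.le hu1
      have k4 := kk_pos hu.1.le hu1
      rw [mm, div_le_iff₀ k4]
      nlinarith
    linarith
  linarith

lemma E_ge {x : ℝ} (hx0 : 0 ≤ x) (hx : x < 1) :
    Real.sqrt (1 - x) * kk x ≤ x * bb x + (1 - x) * kk x := by
  have hd : ∀ y < 1, HasDerivAt (fun x => x * bb x + (1 - x) * kk x - Real.sqrt (1 - x) * kk x)
      ((kk y - bb y) / 2 * (1 / Real.sqrt (1 - y) - 1)) y := by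
    intro y hy
    have h2 : 0 < 1 - y := by linarith
    have hs := ((hasDerivAt_id y).const_sub 1).sqrt h2.ne'
    have h := ((xbb_deriv hy).add (((hasDerivAt_id y).const_sub 1).mul (kk_deriv hy))).sub
      (hs.mul (kk_deriv hy))
    refine h.congr_deriv ?_
    have hq : 0 < Real.sqrt (1 - y) := Real.sqrt_pos.2 h2
    have hq2 : 1 - y = Real.sqrt (1 - y) ^ 2 := (Real.sq_sqrt h2.le).symm
    simp only [id]
    set q := Real.sqrt (1 - y)
    rw [hq2]
    field_simp
    ring
  have hm : MonotoneOn (fun x => x * bb x + (1 - x) * kk x - Real.sqrt (1 - x) * kk x) (Ico 0 1) := by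
    refine monotoneOn_of_deriv_nonneg (convex_Ico 0 1)
      (fun y hy => (hd y hy.2).continuousAt.continuousWithinAt) (fun y hy => ?_) (fun y hy => ?_)
    · rw [interior_Ico] at hy
      exact (hd y hy.2).differentiableAt.differentiableWithinAt
    · rw [interior_Ico] at hy
      rw [(hd y hy.2).deriv]
      have h2 : 0 < 1 - y := by linarith [hy.2]
      have hq : 0 < Real.sqrt (1 - y) := Real.sqrt_pos.2 h2
      have h3 : Real.sqrt (1 - y) ≤ 1 := Real.sqrt_le_one.2 (by linarith [hy.1])
      have h4 : 1 ≤ 1 / Real.sqrt (1 - y) := by rw [le_div_iff₀ hq]; linarith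
      have := bb_le_half hy.1.le hy.2
      have := kk_pos hy.1.le hy.2
      refine mul_nonneg (by linarith) (by linarith)
  have := hm ⟨le_refl 0, one_pos⟩ ⟨hx0, hx⟩ hx0
  simp at this
  linarith

lemma P_anti : AntitoneOn (fun x => bb x / kk x) (Ioo 0 1) := by
  have hm : MonotoneOn (fun x => -(bb x / kk x)) (Ioo 0 1) := by
    refine mono_aux (fun y hy => ((bb_deriv hy.1 hy.2).div (kk_deriv hy.2)
      (kk_pos hy.1.le hy.2).ne').neg) ?_
    intro y hy
    have h1 : 0 < y := hy.1
    have h2 : 0 < 1 - y := by linarith [hy.2]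
    have k1 := kk_pos hy.1.le hy.2
    have h3 := E_ge hy.1.le hy.2
    have h4 := pow_le_pow_left₀ (by positivity) h3 2
    rw [mul_pow, Real.sq_sqrt h2.le] at h4
    have e : -(((kk y / 2 - bb y) / y * kk y - bb y * (bb y / (2 * (1 - y)))) / kk y ^ 2) =
       ((y * bb y + (1 - y) * kk y) ^ 2 - (1 - y) * kk y ^ 2) / (2 * y ^ 2 * (1 - y) * kk y ^ 2) := by
      field_simp
      ring
    rw [e]
    refine div_nonneg (by linarith) (by positivity)
  intro a ha b hb hab
  have := hm ha hb hab
  simp only at this ⊢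
  linarith

/-- Lower bound on the product of the two complementary integrals. -/
lemma ineqD' {x : ℝ} (hx0 : 0 < x) (hx : x ≤ 1 / 2) :
    Real.log 4 ≤ 2 / Real.pi * (kk x * kk (1 - x)) + (1 / 2 * Real.log x + 1 / 2 * Real.log (1 - x)) := by
  set A : ℝ → ℝ := fun x =>
    2 / Real.pi * (kk x * kk (1 - x)) + (1 / 2 * Real.log x + 1 / 2 * Real.log (1 - x)) with hA
  have hpi := Real.pi_pos
  have hd : ∀ y ∈ Ioo (0:ℝ) 1, HasDerivAt A (2 / Real.pi * ((bb y * kk (1 - y) - kk y * bb (1 - y)))) y := by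
    intro y hy
    have h1 : 0 < y := hy.1
    have h2 : 0 < 1 - y := by linarith [hy.2]
    have h := (((kk_deriv hy.2).mul (kk1_deriv hy.1)).const_mul (2 / Real.pi)).add
      (((Real.hasDerivAt_log hy.1.ne').const_mul (1 / 2)).add
        ((((hasDerivAt_id y).const_sub 1).log h2.ne').const_mul (1 / 2)))
    refine HasDerivAt.congr_deriv (f := A) h ?_
    have hl := legendre h1 hy.2
    simp only [id]
    field_simp
    linear_combination (-2) * (1 - 2 * y) * hl
  have hx1 : x < 1 := by linarith
  have hm : MonotoneOn A (Ioc 0 (1 / 2)) := by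
    refine monotoneOn_of_deriv_nonneg (convex_Ioc 0 (1 / 2))
      (fun y hy => (hd y ⟨hy.1, by linarith [hy.2]⟩).continuousAt.continuousWithinAt)
      (fun y hy => ?_) (fun y hy => ?_)
    · rw [interior_Ioc] at hy
      exact (hd y ⟨hy.1, by linarith [hy.2]⟩).differentiableAt.differentiableWithinAt
    · rw [interior_Ioc] at hy
      have hy1 : y < 1 := by linarith [hy.2]
      rw [(hd y ⟨hy.1, hy1⟩).deriv]
      have h2 : 0 < 1 - y := by linarith
      have k1 := kk_pos hy.1.le hy1
      have k2 := kk_pos h2.le (by linarith [hy.1])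
      have := P_anti ⟨hy.1, hy1⟩ ⟨h2, by linarith [hy.1]⟩ (by linarith [hy.2])
      simp only at this
      rw [div_le_div_iff₀ k2 k1] at this
      refine mul_nonneg (by positivity) (by linarith)
  have hlim : Tendsto (fun y => kk (1 - y) + 1 / 2 * Real.log y + 1 / 2 * Real.log (1 - y))
      (𝓝[>] 0) (𝓝 (Real.log 4)) := by
    have : ContinuousAt (fun y : ℝ => 1 / 2 * Real.log (1 - y)) 0 :=
      ContinuousAt.mul continuousAt_const (ContinuousAt.log (by fun_prop) (by simp))
    have h := kk_asym.add (this.tendsto.mono_left (nhdsWithin_le_nhds (s := Ioi 0)))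
    simpa using h
  refine le_of_tendsto hlim ?_
  have hz2 : Ioo (0:ℝ) x ∈ 𝓝[>] (0:ℝ) := Ioo_mem_nhdsGT hx0
  filter_upwards [hz2] with u hu
  have h1 := hm ⟨hu.1, hu.2.le.trans hx⟩ ⟨hx0, hx⟩ hu.2.le
  refine le_trans ?_ h1
  have h2 : kk (1 - u) ≤ 2 / Real.pi * (kk u * kk (1 - u)) := by
    have hu1 := hu.2.trans hx1
    have k2 := kk_pos (x := 1 - u) (by linarith) (by linarith [hu.1])
    have k3 := kk_ge hu.1.le hu1
    rw [div_mul_eq_mul_div, le_div_iff₀ hpi]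
    nlinarith
  simp only [hA]
  linarith

lemma ineqD {x : ℝ} (hx0 : 0 < x) (hx : x < 1) :
    Real.log 4 ≤ 2 / Real.pi * (kk x * kk (1 - x)) + (1 / 2 * Real.log x + 1 / 2 * Real.log (1 - x)) := by
  rcases le_total x (1 / 2) with h | h
  · exact ineqD' hx0 h
  · have := ineqD' (x := 1 - x) (by linarith) (by linarith)
    rw [sub_sub_cancel] at this
    rw [mul_comm (kk x)]
    linarith

lemma mm_mul {x : ℝ} (hx0 : 0 < x) (hx : x < 1) : mm x * mm (1 - x) = Real.pi ^ 2 / 4 := by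
  have k1 := kk_pos hx0.le hx
  have k2 := kk_pos (x := 1 - x) (by linarith) (by linarith)
  rw [mm, mm, sub_sub_cancel]
  field_simp
  try norm_num

lemma mm_anti : StrictAntiOn mm (Ioo 0 1) := by
  have hm : StrictMonoOn (fun x => -(mm x)) (Ioo 0 1) := by
    refine strictMono_aux (fun y hy => (mm_deriv hy.1 hy.2).neg) ?_
    intro y hy
    have h1 : 0 < y := hy.1
    have h2 : 0 < 1 - y := by linarith [hy.2]
    have k1 := kk_pos hy.1.le hy.2
    have := Real.pi_pos
    rw [neg_neg]
    positivity
  intro a ha b hb hab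
  have := hm ha hb hab
  simp only at this
  linarith

lemma mm_tend : Tendsto mm (𝓝[>] 0) atTop := by
  have h1 : Tendsto (fun x => kk (1 - x)) (𝓝[>] 0) atTop := by
    have h2 : Tendsto (fun x => -(1 / 2) * Real.log x) (𝓝[>] 0) atTop :=
      Real.tendsto_log_nhdsGT_zero.const_mul_atBot_of_neg (by norm_num)
    refine (kk_asym.add_atTop h2).congr fun x => ?_
    ring
  have h3 : Tendsto (fun x => Real.pi / 2 / kk x) (𝓝[>] 0) (𝓝 1) := by
    have := (tendsto_const_nhds (x := Real.pi / 2)).div kk_tend0 (by positivity)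
    rwa [div_self (by positivity)] at this
  refine (h1.atTop_mul_pos one_pos h3).congr fun x => ?_
  rw [mm]; ring

lemma mm_surj {c : ℝ} (hc : 0 < c) : ∃ x ∈ Ioo (0:ℝ) 1, mm x = c := by
  obtain ⟨a, ha, ha2⟩ := ((mm_tend.eventually_gt_atTop c).and hm01).exists
  obtain ⟨b, hb, hb2⟩ := ((mm_tend.eventually_gt_atTop (Real.pi ^ 2 / 4 / c)).and hm01).exists
  have h1 : mm (1 - b) < c := by
    have h2 := mm_mul hb2.1 hb2.2
    have h3 := mm_pos (x := 1 - b) (by linarith [hb2.2]) (by linarith [hb2.1])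
    rw [div_lt_iff₀ hc, ← h2] at hb
    have h4 := mm_pos hb2.1 hb2.2
    exact lt_of_mul_lt_mul_left hb h4.le
  have := isPreconnected_Ioo.intermediate_value (s := Ioo (0:ℝ) 1) (f := mm) (a := 1 - b) (b := a)
    ⟨by linarith [hb2.2], by linarith [hb2.1]⟩ ha2
    (fun x hx => (mm_deriv hx.1 hx.2).continuousAt.continuousWithinAt) ⟨h1.le, ha.le⟩
  exact this

lemma ratio_deriv {x : ℝ} (hx0 : 0 < x) (hx : x < 1) :
    HasDerivAt (fun x => kk x / kk (1 - x)) (Real.pi / (4 * x * (1 - x) * kk (1 - x) ^ 2)) x := by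
  have k1 := kk_pos (x := 1 - x) (by linarith) (by linarith)
  have h := (kk_deriv hx).div (kk1_deriv hx0) k1.ne'
  refine h.congr_deriv ?_
  have h1 : 0 < 1 - x := by linarith
  have hl := legendre hx0 hx
  field_simp
  linear_combination 4 * hl

lemma Q_mono {c : ℝ} (hc : Real.pi ^ 2 / 4 ≤ c) :
    StrictMonoOn (fun x => c * (kk x / kk (1 - x)) ^ 2 - kk x ^ 2) (Ioo 0 1) := by
  refine strictMono_aux (fun y hy => (((ratio_deriv hy.1 hy.2).pow 2).const_mul c).sub
    ((kk_deriv hy.2).pow 2)) ?_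
  intro y hy
  have h1 : 0 < y := hy.1
  have h2 : 0 < 1 - y := by linarith [hy.2]
  have k1 := kk_pos hy.1.le hy.2
  have k2 := kk_pos h2.le (by linarith)
  have hB := ineqB hy.1 hy.2
  have hpi := Real.pi_pos
  have e : 0 < kk y * (c * Real.pi / 2 - y * bb y * kk (1 - y) ^ 3) / (y * (1 - y) * kk (1 - y) ^ 3) := by
    refine div_pos (mul_pos k1 ?_) (by positivity)
    nlinarith
  refine lt_of_lt_of_eq e ?_
  norm_num
  field_simp
  ring

lemma mu_eq {u : ℝ} (hu : u ∈ Ioo (0:ℝ) 1) : mu u = mm (u ^ 2) := by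
  have : ∀ r, ellK r = kk (r ^ 2) := fun r => rfl
  rw [mu, mm, this, this, Real.sq_sqrt]
  nlinarith [hu.1, hu.2]

/-- The inverse of `mm`. -/
noncomputable def YY (c : ℝ) : ℝ := if h : 0 < c then (mm_surj h).choose else 0

lemma YY_spec {c : ℝ} (hc : 0 < c) : YY c ∈ Ioo (0:ℝ) 1 ∧ mm (YY c) = c := by
  rw [YY, dif_pos hc]
  exact (mm_surj hc).choose_spec

lemma YY_mm {x : ℝ} (hx : x ∈ Ioo (0:ℝ) 1) : YY (mm x) = x := by
  have h := YY_spec (mm_pos hx.1 hx.2)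
  exact mm_anti.injOn h.1 hx h.2

lemma YY_anti : StrictAntiOn YY (Ioi 0) := by
  intro a ha b hb hab
  have h1 := YY_spec ha
  have h2 := YY_spec hb
  by_contra hcon
  push Not at hcon
  have := mm_anti.antitoneOn h1.1 h2.1 hcon
  rw [h1.2, h2.2] at this
  linarith

lemma YY_cont {c : ℝ} (hc : 0 < c) : ContinuousAt YY c := by
  have hm : StrictMonoOn (fun c => -YY c) (Ioi 0) := fun a ha b hb hab => neg_lt_neg (YY_anti ha hb hab)
  have : ContinuousAt (fun c => -YY c) c := by
    refine hm.continuousAt_of_image_mem_nhds (Ioi_mem_nhds hc) ?_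
    have h1 := (YY_spec hc).1
    refine mem_of_superset (Ioo_mem_nhds (a := -1) (b := 0) (by linarith [h1.2]) (by linarith [h1.1])) ?_
    intro z hz
    have hz' : -z ∈ Ioo (0:ℝ) 1 := ⟨by linarith [hz.2], by linarith [hz.1]⟩
    exact ⟨mm (-z), mm_pos hz'.1 hz'.2, by simp only [YY_mm hz', neg_neg]⟩
  have h2 := this.neg
  have e : (-fun c => -YY c) = YY := by funext z; simp
  rwa [e] at h2

lemma YY_deriv {c : ℝ} (hc : 0 < c) : HasDerivAt YY
    (-(Real.pi ^ 2 / (8 * YY c * (1 - YY c) * kk (YY c) ^ 2)))⁻¹ c := by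
  obtain ⟨h1, h2⟩ := YY_spec hc
  refine HasDerivAt.of_local_left_inverse (YY_cont hc) (mm_deriv h1.1 h1.2) ?_ ?_
  · have := h1.1
    have h2 : 0 < 1 - YY c := by linarith [h1.2]
    have k1 := kk_pos h1.1.le h1.2
    have := Real.pi_pos
    exact neg_ne_zero.2 (by positivity)
  · filter_upwards [Ioi_mem_nhds hc] with y hy
    exact (YY_spec hy).2

lemma W_deriv {c : ℝ} (hc : 0 < c) : HasDerivAt (fun c => Real.log (1 - YY c) - Real.log (YY c))
    (8 * kk (YY c) ^ 2 / Real.pi ^ 2) c := by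
  obtain ⟨h1, -⟩ := YY_spec hc
  have h3 : 0 < 1 - YY c := by linarith [h1.2]
  have h4 := h1.1
  have k1 := kk_pos h1.1.le h1.2
  have hpi := Real.pi_pos
  refine ((((YY_deriv hc).const_sub 1).log h3.ne').sub ((YY_deriv hc).log h1.1.ne')).congr_deriv ?_
  field_simp
  try ring

theorem stmt_17 (eta : ℝ → ℝ → ℝ)
    (heta : ∀ K t : ℝ, 0 < K → 0 < t → ∀ u ∈ Set.Ioo (0:ℝ) 1,
      mu u = K * mu (1 / Real.sqrt (1 + t)) → eta K t = 1 / u ^ 2 - 1) (t : ℝ) (ht : 0 < t) (f : ℝ → ℝ)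
    (hf : f = fun K : ℝ =>
      (16:ℝ) ^ (1 / K) * eta K t / (t ^ (1 / K) * (1 + t) ^ (K - 1 / K))) :
    StrictMonoOn f (Set.Ici 1) ∧ ConvexOn ℝ (Set.Ici 1) f ∧
    f 1 = 16 ∧ Filter.Tendsto f Filter.atTop Filter.atTop ∧
    f '' Set.Ici 1 = Set.Ici 16 ∧
    ∀ K : ℝ, 1 < K →
      (16:ℝ) ^ (1 - 1 / K) * t ^ (1 / K) * (1 + t) ^ (K - 1 / K) < eta K t := by
  have hpi := Real.pi_pos
  have ht1 : 0 < 1 + t := by linarith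
  have hst : 1 < Real.sqrt (1 + t) := by
    rw [Real.lt_sqrt (by norm_num)]; linarith
  have hu0 : 1 / Real.sqrt (1 + t) ∈ Ioo (0:ℝ) 1 :=
    ⟨by positivity, by rw [div_lt_one (by linarith)]; exact hst⟩
  set x0 : ℝ := 1 / (1 + t) with hx0
  have hx0m : x0 ∈ Ioo (0:ℝ) 1 := ⟨by positivity, by rw [hx0, div_lt_one ht1]; linarith⟩
  have hsq : (1 / Real.sqrt (1 + t)) ^ 2 = x0 := by
    rw [div_pow, Real.sq_sqrt ht1.le, one_pow]
  have hmu0 : mu (1 / Real.sqrt (1 + t)) = mm x0 := by rw [mu_eq hu0, hsq]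
  set m0 := mm x0 with hm0
  have hm0p : 0 < m0 := mm_pos hx0m.1 hx0m.2
  have heta2 : ∀ K, 0 < K → eta K t = (1 - YY (K * m0)) / YY (K * m0) := by
    intro K hK
    obtain ⟨h1, h2⟩ := YY_spec (mul_pos hK hm0p)
    have hs : Real.sqrt (YY (K * m0)) ^ 2 = YY (K * m0) := Real.sq_sqrt h1.1.le
    have hsm : Real.sqrt (YY (K * m0)) ∈ Ioo (0:ℝ) 1 :=
      ⟨Real.sqrt_pos.2 h1.1, by rw [Real.sqrt_lt' one_pos]; simpa using h1.2⟩
    rw [heta K t hK ht _ hsm (by rw [mu_eq hsm, hs, h2, hmu0]), hs]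
    have := h1.1
    field_simp
  set ell := Real.log (1 + t) with hell
  set a := Real.log 16 - Real.log t + ell with ha
  have l16 : Real.log 16 = 2 * Real.log 4 := by
    rw [show (16:ℝ) = 4 ^ 2 by norm_num, Real.log_pow]; push_cast; ring
  have lx0 : Real.log x0 = -ell := by rw [hx0, one_div, Real.log_inv]
  have lx1 : Real.log (1 - x0) = Real.log t - ell := by
    have : 1 - x0 = t / (1 + t) := by rw [hx0]; field_simp; ring
    rw [this, Real.log_div ht.ne' ht1.ne']
  have hc : Real.pi ^ 2 / 4 ≤ a * m0 / 2 := by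
    have h1 := ineqC (x := 1 - x0) (by linarith [hx0m.2]) (by linarith [hx0m.1])
    rw [lx1] at h1
    have h2 := mm_mul hx0m.1 hx0m.2
    rw [← hm0] at h2
    rw [← h2]
    nlinarith
  set phi : ℝ → ℝ := fun K => a * K⁻¹ - K * ell +
    (Real.log (1 - YY (K * m0)) - Real.log (YY (K * m0))) with hphi
  set dphi : ℝ → ℝ := fun K => a * (-(K ^ 2)⁻¹) - ell + 8 * kk (YY (K * m0)) ^ 2 / Real.pi ^ 2 * m0
    with hdphi
  have hd : ∀ K, 0 < K → HasDerivAt phi (dphi K) K := by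
    intro K hK
    have hW : HasDerivAt (fun K => Real.log (1 - YY (K * m0)) - Real.log (YY (K * m0)))
        (8 * kk (YY (K * m0)) ^ 2 / Real.pi ^ 2 * m0) K := by
      have := HasDerivAt.comp K (h := fun K => K * m0) (W_deriv (mul_pos hK hm0p))
        ((hasDerivAt_id K).mul_const m0)
      rw [one_mul] at this
      exact this
    refine HasDerivAt.congr_deriv (f := phi) ((((hasDerivAt_inv hK.ne').const_mul a).sub
      ((hasDerivAt_id K).mul_const ell)).add hW) ?_
    simp [hdphi]
  have hfe : ∀ K, 0 < K → f K = Real.exp (phi K) := by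
    intro K hK
    obtain ⟨h1, h2⟩ := YY_spec (mul_pos hK hm0p)
    have h3 : 0 < 1 - YY (K * m0) := by linarith [h1.2]
    simp only [hf, hphi]
    rw [heta2 K hK, Real.rpow_def_of_pos (by norm_num), Real.rpow_def_of_pos ht,
      Real.rpow_def_of_pos ht1, ← Real.exp_log (div_pos h3 h1.1), Real.log_div h3.ne' h1.1.ne',
      ← Real.exp_add, ← Real.exp_add, ← Real.exp_sub]
    congr 1
    simp only [ha, ← hell]
    field_simp
    ring
  have hdm : StrictMonoOn dphi (Ioi 0) := by
    have he : ∀ K, 0 < K → dphi K = -ell - 8 * m0 / Real.pi ^ 2 *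
        ((a * m0 / 2) * (kk (YY (K * m0)) / kk (1 - YY (K * m0))) ^ 2 - kk (YY (K * m0)) ^ 2) := by
      intro K hK
      obtain ⟨h1, h2⟩ := YY_spec (mul_pos hK hm0p)
      have k1 := kk_pos h1.1.le h1.2
      have k2 := kk_pos (x := 1 - YY (K * m0)) (by linarith [h1.2]) (by linarith [h1.1])
      have hKe : K = Real.pi / 2 * kk (1 - YY (K * m0)) / kk (YY (K * m0)) / m0 := by
        rw [eq_div_iff hm0p.ne']; exact h2.symm
      simp only [hdphi]
      set y := YY (K * m0)
      rw [hKe]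
      field_simp
      ring
    intro A hA B hB hAB
    rw [he A hA, he B hB]
    have h1 := (YY_spec (mul_pos hA hm0p)).1
    have h2 := (YY_spec (mul_pos hB hm0p)).1
    have h3 := YY_anti (mul_pos hA hm0p) (mul_pos hB hm0p) (mul_lt_mul_of_pos_right hAB hm0p)
    have h4 := Q_mono hc h2 h1 h3
    simp only at h4
    have h5 : 0 < 8 * m0 / Real.pi ^ 2 := by positivity
    have := mul_lt_mul_of_pos_left h4 h5
    linarith
  have hd1 : 0 ≤ dphi 1 := by
    have hD := ineqD hx0m.1 hx0m.2
    rw [lx0, lx1] at hD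
    have k1 := kk_pos hx0m.1.le hx0m.2
    have e : 8 * kk x0 ^ 2 / Real.pi ^ 2 * m0 = 2 * (2 / Real.pi * (kk x0 * kk (1 - x0))) := by
      rw [hm0, mm]; field_simp; ring
    simp only [hdphi, one_mul]
    rw [hm0, YY_mm hx0m, ← hm0, e]
    simp only [ha, l16]
    norm_num
    linarith
  have hpos : ∀ K, 1 < K → 0 < dphi K := fun K hK =>
    lt_of_le_of_lt hd1 (hdm (mem_Ioi.2 one_pos) (mem_Ioi.2 (by linarith)) hK)
  have hphic : ContinuousOn phi (Ici 1) := fun K hK =>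
    (hd K (lt_of_lt_of_le one_pos hK)).continuousAt.continuousWithinAt
  have hphim : StrictMonoOn phi (Ici 1) := by
    refine strictMonoOn_of_deriv_pos (convex_Ici 1) hphic ?_
    intro K hK
    rw [interior_Ici] at hK
    rw [(hd K (one_pos.trans hK)).deriv]
    exact hpos K hK
  have hphiconv : ConvexOn ℝ (Ici 1) phi := by
    refine MonotoneOn.convexOn_of_deriv (convex_Ici 1) hphic ?_ ?_
    · intro K hK
      rw [interior_Ici] at hK
      exact (hd K (one_pos.trans hK)).differentiableAt.differentiableWithinAt
    · rw [interior_Ici]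
      intro A hA B hB hAB
      rw [(hd A (one_pos.trans hA)).deriv, (hd B (one_pos.trans hB)).deriv]
      exact hdm.monotoneOn (mem_Ioi.2 (one_pos.trans hA)) (mem_Ioi.2 (one_pos.trans hB)) hAB
  have hfE : EqOn (fun K => Real.exp (phi K)) f (Ici 1) := fun K hK =>
    (hfe K (lt_of_lt_of_le one_pos hK)).symm
  have r1 : StrictMonoOn f (Ici 1) := by
    refine StrictMonoOn.congr ?_ hfE
    exact fun A hA B hB hAB => Real.exp_lt_exp.2 (hphim hA hB hAB)
  have r2 : ConvexOn ℝ (Ici 1) f := by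
    refine ConvexOn.congr ?_ hfE
    refine ⟨convex_Ici 1, fun x hx y hy p q hp hq hpq => ?_⟩
    refine (Real.exp_le_exp.2 (hphiconv.2 hx hy hp hq hpq)).trans ?_
    exact convexOn_exp.2 (mem_univ _) (mem_univ _) hp hq hpq
  have r0 : ContinuousOn f (Ici 1) :=
    (Real.continuous_exp.comp_continuousOn hphic).congr fun K hK => (hfE hK).symm
  have r3 : f 1 = 16 := by
    have : eta 1 t = t := by
      rw [heta2 1 one_pos, one_mul, hm0, YY_mm hx0m, hx0]
      field_simp
      ring
    simp only [hf, this]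
    norm_num
    field_simp
  have r4 : Tendsto f atTop atTop := by
    have h12 : f 1 < f 2 := r1 (mem_Ici.2 le_rfl) (mem_Ici.2 (by norm_num)) (by norm_num)
    have hb : ∀ K, 2 ≤ K → (f 2 - f 1) * K + (2 * f 1 - f 2) ≤ f K := by
      intro K hK
      have hK1 : 0 < K - 1 := by linarith
      have q1 : 0 ≤ (K - 2) / (K - 1) := div_nonneg (by linarith) hK1.le
      have q2 : 0 ≤ 1 / (K - 1) := by positivity
      have q3 : (K - 2) / (K - 1) + 1 / (K - 1) = 1 := by field_simp; ring
      have h := r2.2 (mem_Ici.2 (le_refl (1:ℝ))) (mem_Ici.2 (show 1 ≤ K by linarith)) q1 q2 q3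
      simp only [smul_eq_mul] at h
      have e : (K - 2) / (K - 1) * 1 + 1 / (K - 1) * K = 2 := by field_simp; ring
      rw [e] at h
      have e2 : (K - 2) / (K - 1) * f 1 + 1 / (K - 1) * f K = ((K - 2) * f 1 + f K) / (K - 1) := by
        ring
      rw [e2, le_div_iff₀ hK1] at h
      linarith
    refine tendsto_atTop_mono' atTop (f₁ := fun K => (f 2 - f 1) * K + (2 * f 1 - f 2)) ?_ ?_
    · filter_upwards [eventually_ge_atTop 2] with K hK using hb K hK
    · exact tendsto_atTop_add_const_right _ _ (tendsto_id.const_mul_atTop (by linarith))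
  have r5 : f '' Ici 1 = Ici 16 := by
    apply Subset.antisymm
    · rintro _ ⟨K, hK, rfl⟩
      rw [← r3]
      exact r1.monotoneOn (mem_Ici.2 le_rfl) hK hK
    · intro v hv
      obtain ⟨N, hN, hN1⟩ := ((r4.eventually_ge_atTop v).and (eventually_ge_atTop 1)).exists
      have := intermediate_value_Icc hN1 (r0.mono Icc_subset_Ici_self) ⟨by rw [r3]; exact hv, hN⟩
      obtain ⟨K, hK, hKe⟩ := this
      exact ⟨K, hK.1, hKe⟩
  refine ⟨r1, r2, r3, r4, r5, fun K hK => ?_⟩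
  have h1 : f 1 < f K := r1 (mem_Ici.2 le_rfl) (mem_Ici.2 hK.le) hK
  rw [r3, hf] at h1
  simp only at h1
  have hK0 : 0 < K := by linarith
  have hden : 0 < t ^ (1 / K) * (1 + t) ^ (K - 1 / K) := by positivity
  rw [lt_div_iff₀ hden] at h1
  have h16 : (16:ℝ) = 16 ^ (1 / K) * 16 ^ (1 - 1 / K) := by
    rw [← Real.rpow_add (by norm_num)]; simp
  have hp : (0:ℝ) < 16 ^ (1 / K) := by positivity
  have h2 : (16:ℝ) ^ (1 / K) * (16 ^ (1 - 1 / K) * t ^ (1 / K) * (1 + t) ^ (K - 1 / K)) <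
      16 ^ (1 / K) * eta K t := by
    refine lt_of_eq_of_lt ?_ h1
    calc (16:ℝ) ^ (1 / K) * (16 ^ (1 - 1 / K) * t ^ (1 / K) * (1 + t) ^ (K - 1 / K))
        = (16 ^ (1 / K) * 16 ^ (1 - 1 / K)) * (t ^ (1 / K) * (1 + t) ^ (K - 1 / K)) := by ring
      _ = _ := by rw [← h16]
  exact lt_of_mul_lt_mul_left h2 hp.le
end
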